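/- Let n ≥ 1, let λ/μ be a skew shape, let A = {1,…,r}, A′ = {1′,…,s′} be alphabets with a total order ≺ on A ∪ A′ refining both natural orders, and let N be an integer at least the number of parts of λ. Then the partition function of the alternate n-ribbon lattice model system B̃_{λ/μ}(X/Y) — the grid with one row per letter of A ∪ A′ and λ_1 + N columns, alternate boundary condition B̃_{λ/μ}, and alternate row weights as specified — equals the super LLT polynomial: Z(B̃_{λ/μ}(X/Y)) = G_{λ/μ}(X/Y;q). -/

import Mathlib

/-!
A row of vertical edge labels is the bead (Maya) configuration of a partition: `∧` marks the
columns `lam_t + ρ_t`. Adding an `n`-ribbon to a partition moves one bead `n` columns to the right,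
and the spin of the ribbon is the number of beads jumped over (`RibAt.beads_eq`, `exists_ribAt`).
Let `u_p` be the operator moving the bead at `p`, with weight `q ^ spin`.

*Lattice side.* The horizontal labels of a row record which beads are on their way, so a row acts on
configurations as an ordered product of factors `1 + z u_p`: a horizontal row with parameter `x` as
`∏ (1 + x u_p)` with the smallest `p` acting first (`Hop`), a vertical row with parameter `y` as
`∏ (1 - y u_p)` with the largest `p` acting first (`Vop`). The partition function is thus a matrix
coefficient of the product of the row operators, where the *bottom* row, i.e. the *largest* letter,
acts first (`partitionZ_eq`).

*Tableau side.* The ribbons of a super ribbon tableau can be added one at a time by increasing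
letter, from left to right inside a horizontal strip and from right to left inside a vertical strip,
and every chain of ribbons in this order is a tableau (`mem_chainSet_iff`). Hence the super LLT
polynomial is the matrix coefficient of the product of the same operators in which the *smallest*
letter acts first (`sum_chainSet`, `superLLT_eq`).

The two products are in opposite order, so it remains to see that the row operators commute
(`rowOp_commute`). As `u_p ^ 2 = 0`, the horizontal operator with parameter `x` is inverse to the
vertical product with coefficient `-x`, and it suffices to treat vertical operators. The product of
two of them is a sum over the sets of beads moved twice and moved once (`twoMoves_eq`); the only
factor not visibly symmetric in the two parameters is the sum `splitSum` over the ways to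
distribute the beads moved once over the two steps. It is symmetric by induction on its largest
element (`splitSum_insert`, `splitSum_comm`).
-/

open Finset

namespace SuperLLT

/-- Two cells in `ℕ × ℕ` are adjacent if they share an edge. -/
def Adj (c d : ℕ × ℕ) : Prop :=
  (c.1 = d.1 ∧ (c.2 + 1 = d.2 ∨ d.2 + 1 = c.2)) ∨
    (c.2 = d.2 ∧ (c.1 + 1 = d.1 ∨ d.1 + 1 = c.1))

/-- A finite set of cells is connected if any two of its cells are joined by a path of
adjacent cells staying inside the set. -/
def ConnectedCells (s : Finset (ℕ × ℕ)) : Prop :=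
  ∀ c ∈ s, ∀ d ∈ s, Relation.ReflTransGen (fun a b => a ∈ s ∧ b ∈ s ∧ Adj a b) c d

/-- A set of cells is (the set of cells of) a skew shape if it is the difference of two
Young diagrams. -/
def IsSkewCells (s : Finset (ℕ × ℕ)) : Prop :=
  ∃ μ lam : YoungDiagram, μ ≤ lam ∧ s = lam.cells \ μ.cells

/-- The set of cells contains no 2×2 square. -/
def NoTwoByTwo (s : Finset (ℕ × ℕ)) : Prop :=
  ∀ i j : ℕ, ¬((i, j) ∈ s ∧ (i + 1, j) ∈ s ∧ (i, j + 1) ∈ s ∧ (i + 1, j + 1) ∈ s)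

/-- An `n`-ribbon: a connected skew shape with `n` cells containing no 2×2 square. -/
def IsRibbon (n : ℕ) (s : Finset (ℕ × ℕ)) : Prop :=
  s.card = n ∧ IsSkewCells s ∧ ConnectedCells s ∧ NoTwoByTwo s

/-- The spin of a ribbon: its number of rows minus one. -/
def spin (s : Finset (ℕ × ℕ)) : ℕ :=
  (s.image Prod.fst).card - 1

/-- The top-right-most cell of a ribbon: minimal row index, maximal column in that row. -/
def topRight (s : Finset (ℕ × ℕ)) : ℕ × ℕ :=
  ((s.image Prod.fst).min.getD 0,
    ((s.filter fun c => c.1 = (s.image Prod.fst).min.getD 0).image Prod.snd).max.getD 0)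

/-- The bottom-left-most cell of a ribbon: maximal row index, minimal column in that row. -/
def bottomLeft (s : Finset (ℕ × ℕ)) : ℕ × ℕ :=
  ((s.image Prod.fst).max.getD 0,
    ((s.filter fun c => c.1 = (s.image Prod.fst).max.getD 0).image Prod.snd).min.getD 0)

/-- The cell `c` of the strip with cell set `strip` touches the northern boundary of the
strip: the cell directly above `c` is not a cell of the strip. -/
def TouchesNorth (strip : Finset (ℕ × ℕ)) (c : ℕ × ℕ) : Prop :=
  c.1 = 0 ∨ (c.1 - 1, c.2) ∉ strip

/-- The cell `c` lies along the (upper-left) boundary of the strip: the cell directly to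
the left of `c` is not a cell of the strip.  This is the condition on the bottom-left-most
box of each ribbon of a vertical ribbon strip (equivalently, flipping a vertical strip over
the antidiagonal produces a horizontal strip whose ribbon heads touch the northern
boundary). -/
def TouchesWest (strip : Finset (ℕ × ℕ)) (c : ℕ × ℕ) : Prop :=
  c.2 = 0 ∨ (c.1, c.2 - 1) ∉ strip

/-- `tiles` is a tiling of the cell set `cells` by `n`-ribbons. -/
def IsTilingOf (n : ℕ) (cells : Finset (ℕ × ℕ)) (tiles : Finset (Finset (ℕ × ℕ))) : Prop :=
  (∀ t ∈ tiles, IsRibbon n t) ∧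
    (∀ t ∈ tiles, ∀ t' ∈ tiles, t ≠ t' → Disjoint t t') ∧
    tiles.sup id = cells

/-- A horizontal `n`-ribbon strip tiling: the top-right-most box of every ribbon touches
the northern boundary of the strip. -/
def IsHorizontalTiling (n : ℕ) (cells : Finset (ℕ × ℕ))
    (tiles : Finset (Finset (ℕ × ℕ))) : Prop :=
  IsTilingOf n cells tiles ∧ ∀ t ∈ tiles, TouchesNorth cells (topRight t)

/-- A vertical `n`-ribbon strip tiling: the bottom-left-most box of every ribbon lies on
the (north-west) boundary of the strip. -/
def IsVerticalTiling (n : ℕ) (cells : Finset (ℕ × ℕ))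
    (tiles : Finset (Finset (ℕ × ℕ))) : Prop :=
  IsTilingOf n cells tiles ∧ ∀ t ∈ tiles, TouchesWest cells (bottomLeft t)

open scoped Classical in
/-- `T` is a super `n`-ribbon tableau of shape `lam / μ`: a set of `n`-ribbons, each
labelled by a letter of `L`, tiling `lam / μ`, such that for every letter `i` the union of
`μ` with the ribbons labelled `≼ i` (with respect to the total order `le` on `L`) is a
partition shape, the ribbons with a fixed label `a` with `horiz a` form a horizontal
ribbon strip, and the ribbons with a fixed label `b` with `¬ horiz b` form a vertical
ribbon strip. -/
def IsSuperTableau (n : ℕ) (μ lam : YoungDiagram) {L : Type*}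
    (le : L → L → Prop) (horiz : L → Prop) (T : Finset (Finset (ℕ × ℕ) × L)) : Prop :=
  μ ≤ lam ∧
    (∀ p ∈ T, IsRibbon n p.1) ∧
    (∀ p ∈ T, ∀ p' ∈ T, p ≠ p' → Disjoint p.1 p'.1) ∧
    (T.sup fun p => p.1) = lam.cells \ μ.cells ∧
    (∀ i : L, ∃ ν : YoungDiagram,
      ν.cells = μ.cells ∪ ((T.filter fun p => le p.2 i).sup fun p => p.1)) ∧
    (∀ p ∈ T,
      (horiz p.2 →
        TouchesNorth ((T.filter fun p' => p'.2 = p.2).sup fun p' => p'.1) (topRight p.1)) ∧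
      (¬horiz p.2 →
        TouchesWest ((T.filter fun p' => p'.2 = p.2).sup fun p' => p'.1) (bottomLeft p.1)))

open scoped Classical in
/-- The (finite) set of all super `n`-ribbon tableaux of shape `lam / μ` with letters in
`L`. -/
noncomputable def superTableaux (n : ℕ) (μ lam : YoungDiagram) (L : Type*) [Fintype L]
    (le : L → L → Prop) (horiz : L → Prop) : Finset (Finset (Finset (ℕ × ℕ) × L)) :=
  ((lam.cells \ μ.cells).powerset ×ˢ (Finset.univ : Finset L)).powerset.filter
    (IsSuperTableau n μ lam le horiz)

/-- The spin of a tableau: the sum of the spins of its ribbons. -/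
def tabSpin {L : Type*} (T : Finset (Finset (ℕ × ℕ) × L)) : ℕ :=
  ∑ p ∈ T, spin p.1

open scoped Classical in
/-- The number of ribbons of the tableau `T` labelled `a`. -/
noncomputable def tabWt {L : Type*} (T : Finset (Finset (ℕ × ℕ) × L)) (a : L) : ℕ :=
  (T.filter fun p => p.2 = a).card

open scoped Classical in
/-- The super LLT polynomial `G_{lam/μ}(X/Y; q)`, evaluated in a commutative ring `R`:
`q` is the spin parameter and `z a` is the variable attached to the letter `a`; a ribbon
labelled by a horizontal letter `a` contributes a factor `z a`, and one labelled by a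
vertical letter `b` contributes `-(z b)`.  (It is `0` if `¬ μ ≤ lam`.) -/
noncomputable def superLLT (n : ℕ) (μ lam : YoungDiagram) (L : Type*) [Fintype L]
    (le : L → L → Prop) (horiz : L → Prop) {R : Type*} [CommRing R] (q : R) (z : L → R) :
    R :=
  ∑ T ∈ superTableaux n μ lam L le horiz,
    q ^ tabSpin T * ∏ a : L, (if horiz a then z a else -z a) ^ tabWt T a

/-- The total order on `Fin r ⊕ Fin s` in which all letters of the first alphabet precede
all letters of the second alphabet. -/
def sumLe {r s : ℕ} : Fin r ⊕ Fin s → Fin r ⊕ Fin s → Prop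
  | Sum.inl i, Sum.inl j => i ≤ j
  | Sum.inl _, Sum.inr _ => True
  | Sum.inr _, Sum.inl _ => False
  | Sum.inr i, Sum.inr j => i ≤ j

end SuperLLT

namespace SuperLLT

/-- The six admissible vertex types of the `n`-ribbon lattice model. -/
inductive VertexType
  | SW | NS | SE | NW | EW | NE
  deriving DecidableEq

/-- Classify an admissible vertex by `(v_N, v_S, v_W(1), v_E(n))`, where on vertical
edges `true` stands for `∧` and on horizontal edges `true` stands for `<`:
`SW = (∧,∧,>,>)`, `NS = (∨,∧,<,>)`, `SE = (∧,∧,<,<)`, `NW = (∨,∨,>,>)`,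
`EW = (∧,∨,>,<)`, `NE = (∨,∨,<,<)`; all other configurations are inadmissible. -/
def classify : Bool → Bool → Bool → Bool → Option VertexType
  | true, true, false, false => some .SW
  | false, true, true, false => some .NS
  | true, true, true, true => some .SE
  | false, false, false, false => some .NW
  | true, false, false, true => some .EW
  | false, false, true, true => some .NE
  | _, _, _, _ => none

/-- A vertex of the `n`-ribbon lattice model is admissible if the labels do not change
along straight edges (`v_E(i) = v_W(i+1)` for `1 ≤ i ≤ n-1`) and as many arrows point in
as out, i.e. `(v_N, v_S, v_W(1), v_E(n))` is one of the six admissible types.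
Tuples are indexed by `Fin n`, with index `k` standing for position `k+1`. -/
def VertexAdmissible (n : ℕ) (vN vS : Bool) (vW vE : Fin n → Bool) : Prop :=
  ∃ h : 0 < n,
    (∀ k : Fin n, ∀ hk : k.val + 1 < n, vE k = vW ⟨k.val + 1, hk⟩) ∧
      (classify vN vS (vW ⟨0, h⟩) (vE ⟨n - 1, Nat.sub_lt h Nat.one_pos⟩)).isSome = true

/-- The Boltzmann weight of a single vertex, given a table `tab` assigning a weight to
each admissible vertex type and each value of `s(v)`, the number of `<` labels among
`v_E(1), …, v_E(n-1)`.  Inadmissible vertices have weight `0`. -/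
def vertexWeight {R : Type*} [CommRing R] (n : ℕ) (tab : VertexType → ℕ → R)
    (vN vS : Bool) (vW vE : Fin n → Bool) : R :=
  if h : 0 < n then
    if ∀ k : Fin n, ∀ hk : k.val + 1 < n, vE k = vW ⟨k.val + 1, hk⟩ then
      match classify vN vS (vW ⟨0, h⟩) (vE ⟨n - 1, Nat.sub_lt h Nat.one_pos⟩) with
      | some ty =>
          tab ty ((Finset.univ.filter fun k : Fin n => k.val < n - 1 ∧ vE k = true).card)
      | none => 0
    else 0
  else 0

/-- Weights of a *horizontal-strip* row with spectral parameter `x` in the (original)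
super ribbon lattice model:
`SW ↦ q^s`, `NS ↦ q^s`, `SE ↦ 0`, `NW ↦ 1`, `EW ↦ q^s x`, `NE ↦ q^s x`. -/
def horizTable {R : Type*} [CommRing R] (q x : R) : VertexType → ℕ → R
  | .SW, s => q ^ s
  | .NS, s => q ^ s
  | .SE, _ => 0
  | .NW, _ => 1
  | .EW, s => q ^ s * x
  | .NE, s => q ^ s * x

/-- Weights of a *vertical-strip* row with spectral parameter `y` in the (original)
super ribbon lattice model:
`SW ↦ q^s`, `NS ↦ 1`, `SE ↦ -y`, `NW ↦ 1`, `EW ↦ -y`, `NE ↦ 0`. -/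
def vertTable {R : Type*} [CommRing R] (q y : R) : VertexType → ℕ → R
  | .SW, s => q ^ s
  | .NS, _ => 1
  | .SE, _ => -y
  | .NW, _ => 1
  | .EW, _ => -y
  | .NE, _ => 0

/-- Weights of a horizontal-strip row with spectral parameter `x` in the *alternate*
super ribbon lattice model, where `t(v) = (n-1) - s(v)` is the number of `>` labels
among `v_E(1), …, v_E(n-1)`:
`SW ↦ 0`, `NS ↦ q^t x`, `SE ↦ q^t`, `NW ↦ q^t x`, `EW ↦ q^t`, `NE ↦ 1`. -/
def altHorizTable {R : Type*} [CommRing R] (n : ℕ) (q x : R) : VertexType → ℕ → R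
  | .SW, _ => 0
  | .NS, s => q ^ (n - 1 - s) * x
  | .SE, s => q ^ (n - 1 - s)
  | .NW, s => q ^ (n - 1 - s) * x
  | .EW, s => q ^ (n - 1 - s)
  | .NE, _ => 1

/-- Weights of a vertical-strip row with spectral parameter `y` in the *alternate*
super ribbon lattice model:
`SW ↦ -y`, `NS ↦ -y`, `SE ↦ q^t`, `NW ↦ 0`, `EW ↦ 1`, `NE ↦ 1`. -/
def altVertTable {R : Type*} [CommRing R] (n : ℕ) (q y : R) : VertexType → ℕ → R
  | .SW, _ => -y
  | .NS, _ => -y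
  | .SE, s => q ^ (n - 1 - s)
  | .NW, _ => 0
  | .EW, _ => 1
  | .NE, _ => 1

/-- A state of an `n`-ribbon lattice grid with `m` rows and `C` columns: a label in
`Bool` (`true = ∧`) on each vertical edge (`m+1` tiers of `C` columns, tier `0` being the
top boundary and tier `m` the bottom boundary) and an `n`-tuple of labels in `Bool`
(`true = <`) on each horizontal edge (`C+1` edges in each of the `m` rows, edge `0` being
the left boundary and edge `C` the right boundary). -/
abbrev GridState (n m C : ℕ) : Type :=
  (Fin (m + 1) → Fin C → Bool) × (Fin m → Fin (C + 1) → Fin n → Bool)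

/-- The Boltzmann weight of a state: the product of the weights of its vertices, row `r`
using the weight table `tab r`. -/
def stateWeight {R : Type*} [CommRing R] (n m C : ℕ) (tab : Fin m → VertexType → ℕ → R)
    (st : GridState n m C) : R :=
  ∏ r : Fin m, ∏ c : Fin C,
    vertexWeight n (tab r) (st.1 r.castSucc c) (st.1 r.succ c)
      (st.2 r c.castSucc) (st.2 r c.succ)

/-- The boundary condition: prescribed labels on the top, bottom, left and right
boundary edges. -/
def BoundaryCond {n m C : ℕ} (top bottom : Fin C → Bool)
    (left right : Fin m → Fin n → Bool) (st : GridState n m C) : Prop :=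
  st.1 0 = top ∧ st.1 (Fin.last m) = bottom ∧
    ∀ r : Fin m, st.2 r 0 = left r ∧ st.2 r (Fin.last C) = right r

open scoped Classical in
/-- The partition function of the lattice model: the sum of the weights of all states
with the given boundary condition. -/
noncomputable def partitionZ {R : Type*} [CommRing R] (n m C : ℕ)
    (tab : Fin m → VertexType → ℕ → R) (top bottom : Fin C → Bool)
    (left right : Fin m → Fin n → Bool) : R :=
  ∑ st ∈ Finset.univ.filter (BoundaryCond top bottom left right),
    stateWeight n m C tab st

/-- The boundary row of vertical-edge labels determined by `lam + ρ`, where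
`ρ = (N, N-1, …, 1)` and `lam` is padded with zeros to `N` parts: numbering the `C`
columns `1, …, C` from the left, column `c` carries `∧ = true` exactly if `c` is a part
of `lam + ρ`, i.e. of the form `lam_{t+1} + (N - t)` for some `0 ≤ t < N`. -/
def diagBoundary (lam : YoungDiagram) (N C : ℕ) : Fin C → Bool := fun c =>
  decide ((c.val + 1) ∈ (Finset.range N).image fun t => lam.rowLen t + (N - t))

end SuperLLT

/-! ### A symmetric sum over splittings of a set -/

namespace SuperLLT

/-- The factor contributed by a bead moving from `s` to `s + n` past a resting bead at `t`: it is `Q`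
if `t` is strictly jumped over, `0` if `t` blocks the target, and `1` otherwise. -/
def phi {R : Type*} [CommRing R] (n : ℕ) (Q : R) (s t : ℕ) : R :=
  if s < t then (if t < s + n then Q else if t = s + n then 0 else 1) else 1

/-- The product of the factors `phi` over all pairs of a moving bead in `S` and a resting bead in `T`. -/
def Phi {R : Type*} [CommRing R] (n : ℕ) (Q : R) (S T : Finset ℕ) : R :=
  ∏ s ∈ S, ∏ t ∈ T, phi n Q s t

/-- The generating function of the splittings of `U` into a part `P` weighted by `a` and its
complement weighted by `b`, with interaction `Phi` between the two parts. -/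
def splitSum {R : Type*} [CommRing R] (n : ℕ) (Q a b : R) (U : Finset ℕ) : R :=
  ∑ P ∈ U.powerset, a ^ #P * b ^ #(U \ P) * Phi n Q P (U \ P)

section
variable {R : Type*} [CommRing R]

lemma phi_of_le {n : ℕ} {Q : R} {s t : ℕ} (h : t ≤ s) : phi n Q s t = 1 := by
  simp [phi, not_lt.mpr h]

lemma phi_near {n : ℕ} {Q : R} {s t : ℕ} (h : s < t) (h' : t < s + n) : phi n Q s t = Q := by
  simp [phi, h, h']

lemma phi_far {n : ℕ} {Q : R} {s t : ℕ} (h' : s + n < t) : phi n Q s t = 1 := by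
  simp [phi, show ¬ t < s + n by omega, show t ≠ s + n by omega]

lemma prod_eq_pow_card_filter {ι : Type*} (A : Finset ι) (f : ι → R) (Q : R) (p : ι → Prop)
    [DecidablePred p] (h1 : ∀ i ∈ A, p i → f i = Q) (h2 : ∀ i ∈ A, ¬ p i → f i = 1) :
    ∏ i ∈ A, f i = Q ^ #(A.filter p) := by
  rw [← Finset.prod_filter_mul_prod_filter_not A p,
    Finset.prod_congr rfl (g := fun _ => Q) (fun i hi => ?_),
    Finset.prod_congr (s₁ := A.filter (¬ p ·)) rfl (g := fun _ => (1 : R)) (fun i hi => ?_)]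
  · simp
  · simp only [mem_filter] at hi; exact h2 i hi.1 hi.2
  · simp only [mem_filter] at hi; exact h1 i hi.1 hi.2

/-- Telescoping a product by replacing its factors by `1`, the smallest index first. -/
lemma prod_eq_one_add (P : Finset ℕ) (f : ℕ → R) :
    ∏ s ∈ P, f s = 1 + ∑ i ∈ P, (f i - 1) * ∏ j ∈ P with i < j, f j := by
  have h := Finset.prod_add_ordered P f (fun i => 1 - f i)
  simp only [add_sub_cancel, prod_const_one, mul_one] at h
  have e : ∑ i ∈ P, (f i - 1) * ∏ j ∈ P with i < j, f j =
      -∑ i ∈ P, (1 - f i) * ∏ j ∈ P with i < j, f j := by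
    rw [← Finset.sum_neg_distrib]
    exact Finset.sum_congr rfl fun i _ => by ring
  rw [e]
  linear_combination -h

lemma Phi_insert_left {n : ℕ} {Q : R} {s : ℕ} {S T : Finset ℕ} (h : s ∉ S) :
    Phi n Q (insert s S) T = (∏ t ∈ T, phi n Q s t) * Phi n Q S T := by
  simp [Phi, prod_insert h]

lemma Phi_insert_right {n : ℕ} {Q : R} {t : ℕ} {S T : Finset ℕ} (h : t ∉ T) :
    Phi n Q S (insert t T) = (∏ s ∈ S, phi n Q s t) * Phi n Q S T := by
  simp [Phi, prod_insert h, prod_mul_distrib]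

lemma sum_powerset_sum_mem (V : Finset ℕ) (g : ℕ → Finset ℕ → R) :
    ∑ P ∈ V.powerset, ∑ i ∈ P, g i P =
      ∑ i ∈ V, ∑ P ∈ (V.erase i).powerset, g i (insert i P) := by
  have h1 : ∀ P ∈ V.powerset, ∑ i ∈ P, g i P = ∑ i ∈ V, if i ∈ P then g i P else 0 := by
    intro P hP
    rw [← Finset.sum_filter]
    congr 1
    ext i
    simp only [mem_filter]
    exact ⟨fun h => ⟨mem_powerset.1 hP h, h⟩, fun h => h.2⟩
  rw [Finset.sum_congr rfl h1, Finset.sum_comm]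
  refine Finset.sum_congr rfl fun i hi => ?_
  conv_lhs => rw [← insert_erase hi]
  rw [Finset.sum_powerset_insert (notMem_erase i V)]
  rw [Finset.sum_eq_zero, zero_add]
  · exact Finset.sum_congr rfl fun P _ => by simp
  · intro P hP
    have : i ∉ P := fun h => notMem_erase i V (mem_powerset.1 hP h)
    simp [this]

/-- Recursion on the largest element `M`. If `M` lies in the `a`-part it does not interact; if it
lies in the `b`-part, its interaction product is telescoped, and a term survives only for `i` with
`M ≤ i + n`. Then everything between `i` and `M` is within distance `n` of both, so `i` and `M`
decouple from the splitting of the rest, up to a fixed power of `Q`. -/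
lemma splitSum_insert (n : ℕ) (Q a b : R) (V : Finset ℕ) (M : ℕ) (hM : ∀ i ∈ V, i < M) :
    splitSum n Q a b (insert M V) = (a + b) * splitSum n Q a b V +
      ∑ i ∈ V, (phi n Q i M - 1) * (a * b * Q ^ #(V.filter (i < ·))) *
        splitSum n Q a b (V.erase i) := by
  have hMV : M ∉ V := fun h => lt_irrefl _ (hM M h)
  unfold splitSum
  rw [Finset.sum_powerset_insert hMV]
  have e1 : ∀ P ∈ V.powerset, a ^ #P * b ^ #(insert M V \ P) * Phi n Q P (insert M V \ P) =
      b * (a ^ #P * b ^ #(V \ P) * Phi n Q P (V \ P)) +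
        ∑ i ∈ P, (phi n Q i M - 1) * ((∏ j ∈ P with i < j, phi n Q j M) *
          (b * (a ^ #P * b ^ #(V \ P) * Phi n Q P (V \ P)))) := by
    intro P hP
    have hP' := mem_powerset.1 hP
    have hMP : M ∉ P := fun h => hMV (hP' h)
    rw [insert_sdiff_of_notMem _ hMP, Phi_insert_right (by simp [hMV]),
      card_insert_of_notMem (by simp [hMV]), prod_eq_one_add P (fun s => phi n Q s M)]
    simp only [← mul_assoc, ← Finset.sum_mul]
    ring
  have e2 : ∀ P ∈ V.powerset, a ^ #(insert M P) * b ^ #(insert M V \ insert M P) *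
      Phi n Q (insert M P) (insert M V \ insert M P) =
      a * (a ^ #P * b ^ #(V \ P) * Phi n Q P (V \ P)) := by
    intro P hP
    have hP' := mem_powerset.1 hP
    have hMP : M ∉ P := fun h => hMV (hP' h)
    have : insert M V \ insert M P = V \ P := by
      ext z; simp only [mem_sdiff, mem_insert, not_or]
      constructor
      · rintro ⟨h | h, h1, h2⟩ <;> tauto
      · rintro ⟨h, h2⟩; exact ⟨Or.inr h, fun e => hMV (e ▸ h), h2⟩
    rw [this, card_insert_of_notMem hMP, Phi_insert_left hMP, Finset.prod_eq_one, pow_succ]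
    · ring
    · intro t ht; exact phi_of_le (hM t (mem_sdiff.1 ht).1).le
  rw [Finset.sum_congr rfl e1, Finset.sum_congr rfl e2, Finset.sum_add_distrib,
    sum_powerset_sum_mem V (fun i P => (phi n Q i M - 1) * ((∏ j ∈ P with i < j, phi n Q j M) *
          (b * (a ^ #P * b ^ #(V \ P) * Phi n Q P (V \ P))))), ← Finset.mul_sum,
    ← Finset.mul_sum]
  have e3 : ∀ i ∈ V, ∑ P ∈ (V.erase i).powerset, (phi n Q i M - 1) *
      ((∏ j ∈ insert i P with i < j, phi n Q j M) * (b * (a ^ #(insert i P) *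
        b ^ #(V \ insert i P) * Phi n Q (insert i P) (V \ insert i P)))) =
      (phi n Q i M - 1) * (a * b * Q ^ #(V.filter (i < ·))) *
        ∑ P ∈ (V.erase i).powerset, a ^ #P * b ^ #(V.erase i \ P) * Phi n Q P (V.erase i \ P) := by
    intro i hi
    rw [Finset.mul_sum]
    refine Finset.sum_congr rfl fun P hP => ?_
    have hP' := mem_powerset.1 hP
    by_cases hfar : i + n < M
    · rw [phi_far hfar]; simp
    push Not at hfar
    have hiP : i ∉ P := fun h => notMem_erase i V (hP' h)
    have hs : V \ insert i P = V.erase i \ P := by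
      ext z; simp only [mem_sdiff, mem_insert, mem_erase, not_or]; tauto
    rw [hs, card_insert_of_notMem hiP, Phi_insert_left hiP]
    have f1 : (insert i P).filter (i < ·) = P.filter (i < ·) := by
      rw [filter_insert, if_neg (lt_irrefl i)]
    have p1 : ∏ j ∈ P with i < j, phi n Q j M = Q ^ #(P.filter (i < ·)) := by
      rw [← Finset.prod_const]
      refine Finset.prod_congr rfl fun j hj => ?_
      obtain ⟨hjP, hij⟩ := mem_filter.1 hj
      exact phi_near (hM j (mem_of_mem_erase (hP' hjP))) (by omega)
    have p2 : ∏ t ∈ V.erase i \ P, phi n Q i t = Q ^ #((V.erase i \ P).filter (i < ·)) := by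
      refine prod_eq_pow_card_filter _ _ _ _ (fun t ht hit => ?_) (fun t ht hit => ?_)
      · have := hM t (mem_of_mem_erase (mem_sdiff.1 ht).1)
        exact phi_near hit (by omega)
      · exact phi_of_le (by omega)
    have p3 : #(V.filter (i < ·)) = #(P.filter (i < ·)) + #((V.erase i \ P).filter (i < ·)) := by
      rw [← card_union_of_disjoint, ← filter_union, union_sdiff_of_subset hP']
      · congr 1; ext z; simp only [mem_filter, mem_erase]
        constructor
        · rintro ⟨h1, h2⟩; exact ⟨⟨by omega, h1⟩, h2⟩
        · rintro ⟨⟨_, h1⟩, h2⟩; exact ⟨h1, h2⟩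
      · exact disjoint_filter_filter disjoint_sdiff
    rw [f1, p1, p2, p3, pow_add]
    ring
  rw [Finset.sum_congr rfl e3]
  ring

/-- The recursion `splitSum_insert` has coefficients symmetric in `a` and `b`. -/
theorem splitSum_comm (n : ℕ) (Q a b : R) (U : Finset ℕ) :
    splitSum n Q a b U = splitSum n Q b a U := by
  induction hk : #U using Nat.strong_induction_on generalizing U with
  | _ k ih =>
    rcases U.eq_empty_or_nonempty with rfl | hne
    · simp [splitSum]
    have hmem := U.max'_mem hne
    have hlt : ∀ i ∈ U.erase (U.max' hne), i < U.max' hne := fun i hi =>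
      lt_of_le_of_ne (U.le_max' i (mem_of_mem_erase hi)) (ne_of_mem_erase hi)
    rw [← insert_erase hmem, splitSum_insert _ _ _ _ _ _ hlt, splitSum_insert _ _ _ _ _ _ hlt]
    have hc : #(U.erase (U.max' hne)) < k := hk ▸ card_erase_lt_of_mem hmem
    rw [ih _ hc _ rfl, add_comm a b, mul_comm a b]
    congr 1
    refine Finset.sum_congr rfl fun i hi => ?_
    rw [ih _ ((card_erase_lt_of_mem hi).trans hc) _ rfl]
end
end SuperLLT

/-! ### Two successive bead moves -/

namespace SuperLLT

/-- The translate of a set of positions by `n`. -/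
def shift (n : ℕ) (S : Finset ℕ) : Finset ℕ := S.image (· + n)

/-- The configuration obtained from `B` by simultaneously moving the beads in `S` by `n`. -/
def mv (n : ℕ) (B S : Finset ℕ) : Finset ℕ := (B \ S) ∪ shift n S

lemma mem_shift {n k : ℕ} {S : Finset ℕ} : k ∈ shift n S ↔ ∃ s ∈ S, s + n = k := by
  simp [shift]

lemma add_mem_shift {n k : ℕ} {S : Finset ℕ} : k + n ∈ shift n S ↔ k ∈ S := by
  simp [shift]

lemma card_shift (n : ℕ) (S : Finset ℕ) : #(shift n S) = #S :=
  card_image_of_injective _ (add_left_injective n)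

section
variable {R : Type*} [CommRing R]

lemma Phi_union_left {n : ℕ} {Q : R} {S S' T : Finset ℕ} (h : Disjoint S S') :
    Phi n Q (S ∪ S') T = Phi n Q S T * Phi n Q S' T := by
  simp [Phi, prod_union h]

lemma Phi_union_right {n : ℕ} {Q : R} {S T T' : Finset ℕ} (h : Disjoint T T') :
    Phi n Q S (T ∪ T') = Phi n Q S T * Phi n Q S T' := by
  simp [Phi, prod_union h, prod_mul_distrib]

lemma Phi_shift_shift (n : ℕ) (Q : R) (S T : Finset ℕ) :
    Phi n Q (shift n S) (shift n T) = Phi n Q S T := by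
  unfold Phi shift
  rw [Finset.prod_image (fun _ _ _ _ h => by simpa using h)]
  refine Finset.prod_congr rfl fun s _ => ?_
  rw [Finset.prod_image (fun _ _ _ _ h => by simpa using h)]
  refine Finset.prod_congr rfl fun t _ => ?_
  unfold phi
  split_ifs <;> first | rfl | (exfalso; omega)

/-- A bead of `P` moved first and a bead of `S` moved second interact twice; the two factors together
depend on the pair only through `phi` with parameter `Q ^ 2`. -/
lemma Phi_mul_Phi_shift (n : ℕ) (Q : R) (P S : Finset ℕ) (h : Disjoint P S) :
    Phi n Q P S * Phi n Q S (shift n P) = Phi n (Q ^ 2) P S := by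
  have h2 : Phi n Q S (shift n P) = ∏ s ∈ P, ∏ t ∈ S, phi n Q t (s + n) := by
    unfold Phi shift
    rw [Finset.prod_comm, Finset.prod_image (fun _ _ _ _ h => by simpa using h)]
  rw [h2]
  unfold Phi
  rw [← Finset.prod_mul_distrib]
  refine Finset.prod_congr rfl fun s hs => ?_
  rw [← Finset.prod_mul_distrib]
  refine Finset.prod_congr rfl fun t ht => ?_
  have hst : s ≠ t := fun e => (Finset.disjoint_left.1 h hs) (e ▸ ht)
  unfold phi
  split_ifs <;> first | (exfalso; omega) | ring

lemma Phi_eq_zero {n : ℕ} (hn : 1 ≤ n) {Q : R} {S T : Finset ℕ}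
    (h : ¬ Disjoint T (shift n S)) : Phi n Q S T = 0 := by
  rw [Finset.not_disjoint_iff] at h
  obtain ⟨t, ht, hs⟩ := h
  obtain ⟨s, hs', rfl⟩ := mem_shift.1 hs
  refine Finset.prod_eq_zero hs' (Finset.prod_eq_zero ht ?_)
  simp [phi, show 0 < n from hn]

lemma sum_powerset_mv (n : ℕ) (A S : Finset ℕ) (hd : Disjoint A (shift n S))
    (f : Finset ℕ → R) :
    ∑ X ∈ (A ∪ shift n S).powerset, f X =
      ∑ E ∈ A.powerset, ∑ D ∈ S.powerset, f (E ∪ shift n D) := by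
  rw [← Finset.sum_product']
  refine Finset.sum_nbij' (fun X => (X ∩ A, S.filter (· + n ∈ X)))
    (fun p => p.1 ∪ shift n p.2) ?_ ?_ ?_ ?_ ?_
  · intro X _; simp
  · intro p hp
    simp only [mem_product, mem_powerset] at hp ⊢
    exact union_subset_union hp.1 (image_subset_image hp.2)
  · intro X hX
    ext k
    simp only [mem_union, mem_inter, mem_shift, mem_filter]
    constructor
    · rintro (h | ⟨s, hs, rfl⟩)
      · exact h.1
      · exact hs.2
    · intro hk
      rcases mem_union.1 (mem_powerset.1 hX hk) with h | h
      · exact Or.inl ⟨hk, h⟩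
      · obtain ⟨s, hs, rfl⟩ := mem_shift.1 h
        exact Or.inr ⟨s, ⟨hs, hk⟩, rfl⟩
  · rintro ⟨E, D⟩ hp
    simp only [mem_product, mem_powerset] at hp
    have hd' := Finset.disjoint_left.1 hd
    ext k
    · simp only [mem_inter, mem_union]
      constructor
      · rintro ⟨h | h, hk⟩
        · exact h
        · exact absurd (image_subset_image hp.2 h) (hd' hk)
      · exact fun h => ⟨Or.inl h, hp.1 h⟩
    · simp only [mem_filter, mem_union, add_mem_shift]
      constructor
      · rintro ⟨hk, h | h⟩
        · exact absurd (add_mem_shift.2 hk) (hd' (hp.1 h))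
        · exact h
      · exact fun h => ⟨hp.2 h, Or.inr h⟩
  · intro X hX
    congr 1
    ext k
    simp only [mem_union, mem_inter, mem_shift, mem_filter]
    constructor
    · intro hk
      rcases mem_union.1 (mem_powerset.1 hX hk) with h | h
      · exact Or.inl ⟨hk, h⟩
      · obtain ⟨s, hs, rfl⟩ := mem_shift.1 h
        exact Or.inr ⟨s, ⟨hs, hk⟩, rfl⟩
    · rintro (h | ⟨s, hs, rfl⟩)
      · exact h.1
      · exact hs.2

/-- The total weight of the ways to get from `B` to `X` by two successive simultaneous moves, the
first weighted by `a` and the second by `b`. -/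
def twoMoves (n : ℕ) (q a b : R) (B X : Finset ℕ) : R :=
  ∑ S ∈ B.powerset, ∑ S' ∈ (mv n B S).powerset,
    if X = mv n (mv n B S) S' then
      (a ^ #S * Phi n q S (B \ S)) * (b ^ #S' * Phi n q S' (mv n B S \ S')) else 0

/-- For a fixed first move `S`, the second move is described by the set `E` of beads moved only the
second time and the set `D` of beads moved both times. -/
lemma twoMoves_inner {n : ℕ} (hn : 1 ≤ n) (q a b : R) (B X S : Finset ℕ) (hS : S ⊆ B) :
    (∑ S' ∈ (mv n B S).powerset,
      if X = mv n (mv n B S) S' then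
        (a ^ #S * Phi n q S (B \ S)) * (b ^ #S' * Phi n q S' (mv n B S \ S')) else 0) =
    ∑ E ∈ (B \ S).powerset, ∑ D ∈ S.powerset,
      if X = (B \ (D ∪ ((S \ D) ∪ E))) ∪ shift n ((S \ D) ∪ E) ∪ shift n (shift n D) then
        ((a * b) ^ #D * Phi n q ((S \ D) ∪ E) (B \ (D ∪ ((S \ D) ∪ E))) *
          Phi n q D (B \ (D ∪ ((S \ D) ∪ E))) * Phi n q D ((S \ D) ∪ E) *
          Phi n q (shift n D) (B \ (D ∪ ((S \ D) ∪ E)))) *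
        (a ^ #(S \ D) * b ^ #E * Phi n (q ^ 2) (S \ D) E) else 0 := by
  have key : ∀ E ∈ (B \ S).powerset, ∀ D ∈ S.powerset,
      (a ^ #S * Phi n q S (B \ S)) *
        (b ^ (#E + #D) * (Phi n q E (B \ (D ∪ ((S \ D) ∪ E))) * Phi n q E (shift n (S \ D)) *
          (Phi n q (shift n D) (B \ (D ∪ ((S \ D) ∪ E))) * Phi n q D (S \ D)))) =
        ((a * b) ^ #D * Phi n q ((S \ D) ∪ E) (B \ (D ∪ ((S \ D) ∪ E))) *
          Phi n q D (B \ (D ∪ ((S \ D) ∪ E))) * Phi n q D ((S \ D) ∪ E) *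
          Phi n q (shift n D) (B \ (D ∪ ((S \ D) ∪ E)))) *
        (a ^ #(S \ D) * b ^ #E * Phi n (q ^ 2) (S \ D) E) := by
    intro E hE D hD
    rw [mem_powerset] at hE hD
    set Z := B \ (D ∪ ((S \ D) ∪ E)) with hZ
    have hPE : Disjoint (S \ D) E := by
      rw [Finset.disjoint_left]; intro k h1 h2
      exact (mem_sdiff.1 (hE h2)).2 (mem_sdiff.1 h1).1
    have hBS : B \ S = Z ∪ E := by
      ext k
      have h1 := @hE k; have h2 := @hD k
      simp only [hZ, mem_sdiff, mem_union] at h1 ⊢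
      tauto
    have hZE : Disjoint Z E := by
      rw [Finset.disjoint_left]; intro k h1 h2
      simp only [hZ, mem_sdiff, mem_union] at h1; tauto
    have hSe : S = D ∪ (S \ D) := (union_sdiff_of_subset hD).symm
    have hcard : #S = #D + #(S \ D) := by
      rw [← card_union_of_disjoint disjoint_sdiff, ← hSe]
    have hPhi : Phi n q S (B \ S) = Phi n q D Z * Phi n q D E *
        (Phi n q (S \ D) Z * Phi n q (S \ D) E) := by
      have hU : ∀ T, Phi n q S T = Phi n q D T * Phi n q (S \ D) T := fun T => by
        rw [← Phi_union_left disjoint_sdiff, ← hSe]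
      rw [hBS, Phi_union_right hZE, hU, hU]; ring
    rw [hPhi, hcard, Phi_union_left hPE, Phi_union_right hPE, ← Phi_mul_Phi_shift n q _ _ hPE]
    ring
  by_cases hd : Disjoint (B \ S) (shift n S)
  · rw [mv, sum_powerset_mv n _ _ hd]
    refine Finset.sum_congr rfl fun E hE => Finset.sum_congr rfl fun D hD => ?_
    have hE' := mem_powerset.1 hE
    have hD' := mem_powerset.1 hD
    have hd' := Finset.disjoint_left.1 hd
    have hED : Disjoint E (shift n D) :=
      Finset.disjoint_of_subset_left hE'
        (Finset.disjoint_of_subset_right (image_subset_image hD') hd)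
    have hsub : ((B \ S) ∪ shift n S) \ (E ∪ shift n D) =
        (B \ (D ∪ ((S \ D) ∪ E))) ∪ shift n (S \ D) := by
      ext k
      simp only [mem_sdiff, mem_union, mem_shift, not_or]
      constructor
      · rintro ⟨h | ⟨s, hs, rfl⟩, h2, h3⟩
        · exact Or.inl ⟨h.1, fun hh => h.2 (hD' hh), fun hh => h.2 hh.1, h2⟩
        · exact Or.inr ⟨s, ⟨hs, fun hh => h3 ⟨s, hh, rfl⟩⟩, rfl⟩
      · rintro (⟨h1, h2, h3, h4⟩ | ⟨s, ⟨hs, hsD⟩, rfl⟩)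
        · have hkS : k ∉ S := fun hh => h3 ⟨hh, h2⟩
          refine ⟨Or.inl ⟨h1, hkS⟩, h4, ?_⟩
          rintro ⟨s, hs, rfl⟩
          exact hd' (mem_sdiff.2 ⟨h1, hkS⟩) (add_mem_shift.2 (hD' hs))
        · refine ⟨Or.inr ⟨s, hs, rfl⟩, fun hh => hd' (hE' hh) (add_mem_shift.2 hs), ?_⟩
          rintro ⟨s', hs', he⟩
          exact hsD ((by omega : s' = s) ▸ hs')
    have hmv : mv n ((B \ S) ∪ shift n S) (E ∪ shift n D) =
        (B \ (D ∪ ((S \ D) ∪ E))) ∪ shift n ((S \ D) ∪ E) ∪ shift n (shift n D) := by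
      rw [mv, hsub]
      simp only [shift, image_union]
      ext k; simp only [mem_union]; tauto
    have hZP : Disjoint (B \ (D ∪ ((S \ D) ∪ E))) (shift n (S \ D)) := by
      refine Finset.disjoint_of_subset_left (fun k hk => ?_)
        (Finset.disjoint_of_subset_right (image_subset_image sdiff_subset) hd)
      simp only [mem_sdiff, mem_union] at hk ⊢; tauto
    rw [hmv]
    refine if_congr Iff.rfl ?_ rfl
    rw [← key E hE D hD, hsub, card_union_of_disjoint hED, card_shift, Phi_union_left hED,
      Phi_union_right hZP, Phi_union_right hZP, Phi_shift_shift]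
  · have h0 : Phi n q S (B \ S) = 0 := Phi_eq_zero hn hd
    rw [Finset.sum_eq_zero, Finset.sum_eq_zero]
    · intro E hE
      refine Finset.sum_eq_zero fun D hD => ?_
      rw [← key E hE D hD, h0]; simp
    · intro S' _; rw [h0]; simp

/-- Passing from (first move `S`, `E`, `D`) to (beads `D` moved twice, beads `U` moved once, the
part `P` of `U` moved the first time). -/
lemma sum_reindex (B : Finset ℕ) (g : Finset ℕ → Finset ℕ → Finset ℕ → R) :
    ∑ S ∈ B.powerset, ∑ E ∈ (B \ S).powerset, ∑ D ∈ S.powerset, g D (S \ D) E =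
      ∑ D ∈ B.powerset, ∑ U ∈ (B \ D).powerset, ∑ P ∈ U.powerset, g D P (U \ P) := by
  simp only [Finset.sum_sigma']
  refine Finset.sum_nbij' (fun p => ⟨p.2.2, (p.1 \ p.2.2) ∪ p.2.1, p.1 \ p.2.2⟩)
    (fun p => ⟨p.1 ∪ p.2.2, p.2.1 \ p.2.2, p.1⟩) ?_ ?_ ?_ ?_ ?_
  · rintro ⟨S, E, D⟩ h
    simp only [mem_sigma, mem_powerset] at h ⊢
    obtain ⟨h1, h2, h3⟩ := h
    refine ⟨h3.trans h1, fun k hk => ?_, subset_union_left⟩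
    have a1 := @h1 k; have a2 := @h2 k; have a3 := @h3 k
    simp only [mem_union, mem_sdiff] at *
    tauto
  · rintro ⟨D, U, P⟩ h
    simp only [mem_sigma, mem_powerset] at h ⊢
    obtain ⟨h1, h2, h3⟩ := h
    refine ⟨fun k hk => ?_, fun k hk => ?_, subset_union_left⟩ <;>
    · have a1 := @h1 k; have a2 := @h2 k; have a3 := @h3 k
      simp only [mem_union, mem_sdiff] at *
      tauto
  · rintro ⟨S, E, D⟩ h
    simp only [mem_sigma, mem_powerset] at h ⊢
    obtain ⟨h1, h2, h3⟩ := h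
    have e1 : D ∪ S \ D = S := union_sdiff_of_subset h3
    have e2 : ((S \ D) ∪ E) \ (S \ D) = E := by
      ext k
      have a1 := @h1 k; have a2 := @h2 k; have a3 := @h3 k
      simp only [mem_union, mem_sdiff] at *
      tauto
    rw [e1, e2]
  · rintro ⟨D, U, P⟩ h
    simp only [mem_sigma, mem_powerset] at h ⊢
    obtain ⟨h1, h2, h3⟩ := h
    have e1 : (D ∪ P) \ D = P := by
      ext k
      have a1 := @h1 k; have a2 := @h2 k; have a3 := @h3 k
      simp only [mem_union, mem_sdiff] at *
      tauto
    rw [e1, union_sdiff_of_subset h3]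
  · rintro ⟨S, E, D⟩ h
    simp only [mem_sigma, mem_powerset] at h ⊢
    obtain ⟨h1, h2, h3⟩ := h
    have e2 : ((S \ D) ∪ E) \ (S \ D) = E := by
      ext k
      have a1 := @h1 k; have a2 := @h2 k; have a3 := @h3 k
      simp only [mem_union, mem_sdiff] at *
      tauto
    rw [e2]

/-- Once the set `D` of beads moved twice and the set `U` of beads moved once are fixed, the sum over
the remaining choices is a `splitSum`, and all other factors are symmetric in `a` and `b`. -/
lemma twoMoves_eq {n : ℕ} (hn : 1 ≤ n) (q a b : R) (B X : Finset ℕ) :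
    twoMoves n q a b B X = ∑ D ∈ B.powerset, ∑ U ∈ (B \ D).powerset,
      if X = (B \ (D ∪ U)) ∪ shift n U ∪ shift n (shift n D) then
        ((a * b) ^ #D * Phi n q U (B \ (D ∪ U)) * Phi n q D (B \ (D ∪ U)) * Phi n q D U *
          Phi n q (shift n D) (B \ (D ∪ U))) * splitSum n (q ^ 2) a b U else 0 := by
  unfold twoMoves
  rw [Finset.sum_congr rfl fun S hS =>
    twoMoves_inner hn q a b B X S (mem_powerset.1 hS)]
  rw [sum_reindex B (fun D P E =>
      if X = (B \ (D ∪ (P ∪ E))) ∪ shift n (P ∪ E) ∪ shift n (shift n D) then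
        ((a * b) ^ #D * Phi n q (P ∪ E) (B \ (D ∪ (P ∪ E))) *
          Phi n q D (B \ (D ∪ (P ∪ E))) * Phi n q D (P ∪ E) *
          Phi n q (shift n D) (B \ (D ∪ (P ∪ E)))) *
        (a ^ #P * b ^ #E * Phi n (q ^ 2) P E) else 0)]
  refine Finset.sum_congr rfl fun D _ => Finset.sum_congr rfl fun U _ => ?_
  rw [splitSum, Finset.mul_sum]
  split_ifs with h
  · refine Finset.sum_congr rfl fun P hP => ?_
    rw [union_sdiff_of_subset (mem_powerset.1 hP), if_pos h]
  · refine Finset.sum_eq_zero fun P hP => ?_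
    rw [union_sdiff_of_subset (mem_powerset.1 hP), if_neg h]

theorem twoMoves_comm {n : ℕ} (hn : 1 ≤ n) (q a b : R) (B X : Finset ℕ) :
    twoMoves n q a b B X = twoMoves n q b a B X := by
  rw [twoMoves_eq hn, twoMoves_eq hn]
  simp only [splitSum_comm n (q ^ 2) a b, mul_comm a b]
end
end SuperLLT

/-! ### Row operators and their commutation -/

namespace SuperLLT

/-- The set of columns carrying a bead. -/
def supp {C : ℕ} (B : Fin C → Bool) : Finset ℕ :=
  (univ.filter fun c => B c = true).map Fin.valEmbedding

lemma mem_supp {C : ℕ} {B : Fin C → Bool} {k : ℕ} :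
    k ∈ supp B ↔ ∃ h : k < C, B ⟨k, h⟩ = true := by
  simp only [supp, mem_map, mem_filter, mem_univ, true_and, Fin.valEmbedding_apply]
  constructor
  · rintro ⟨a, h, rfl⟩; exact ⟨a.2, h⟩
  · rintro ⟨h, h'⟩; exact ⟨⟨k, h⟩, h', rfl⟩

lemma supp_subset {C : ℕ} (B : Fin C → Bool) : supp B ⊆ range C := fun k hk => by
  obtain ⟨h, _⟩ := mem_supp.1 hk; exact mem_range.2 h

lemma lt_of_mem_supp {C : ℕ} {B : Fin C → Bool} {k : ℕ} (h : k ∈ supp B) : k < C :=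
  mem_range.1 (supp_subset B h)

lemma supp_injective {C : ℕ} : Function.Injective (supp : (Fin C → Bool) → Finset ℕ) := by
  intro B B' h
  funext c
  have : (c : ℕ) ∈ supp B ↔ (c : ℕ) ∈ supp B' := by rw [h]
  simp only [mem_supp, c.2, exists_true_left] at this
  exact Bool.eq_iff_iff.2 this

lemma exists_supp {C : ℕ} {X : Finset ℕ} (h : X ⊆ range C) : ∃ B : Fin C → Bool, supp B = X := by
  refine ⟨fun c => decide ((c : ℕ) ∈ X), ?_⟩
  ext k
  simp only [mem_supp, decide_eq_true_eq]
  exact ⟨fun ⟨_, h⟩ => h, fun hk => ⟨mem_range.1 (h hk), hk⟩⟩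

section
variable {R : Type*} [CommRing R]

lemma sum_supp (C : ℕ) (X : Finset ℕ) (F : Finset ℕ → R) :
    ∑ B : Fin C → Bool, (if supp B = X then F (supp B) else 0) =
      if X ⊆ range C then F X else 0 := by
  split_ifs with h
  · obtain ⟨B, rfl⟩ := exists_supp h
    rw [Finset.sum_eq_single B]
    · simp
    · intro B' _ hB'; rw [if_neg (fun e => hB' (supp_injective e))]
    · simp
  · refine Finset.sum_eq_zero fun B _ => ?_
    rw [if_neg]; rintro rfl; exact h (supp_subset B)

/-- Matrices indexed by bead configurations on `C` columns. -/
abbrev Mat (C : ℕ) (R : Type*) := Matrix (Fin C → Bool) (Fin C → Bool) R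

/-- The operator moving the bead at `p` to the free position `p + n`, with weight `q` for each bead
jumped over. The column index is the configuration before the move, the row index the one after. -/
def u (n C : ℕ) (q : R) (p : ℕ) : Mat C R := fun B' B =>
  if p ∈ supp B ∧ p + n ∉ supp B ∧ supp B' = insert (p + n) ((supp B).erase p) then
    q ^ #((supp B).filter fun b => p < b ∧ b < p + n) else 0

lemma u_mul_self {n : ℕ} (hn : 1 ≤ n) (C : ℕ) (q : R) (p : ℕ) :
    u n C q p * u n C q p = 0 := by
  ext B' B
  rw [Matrix.mul_apply]
  refine Finset.sum_eq_zero fun B1 _ => ?_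
  unfold u
  by_cases h : p ∈ supp B1
  · have h2 : ¬ (p ∈ supp B ∧ p + n ∉ supp B ∧ supp B1 = insert (p + n) ((supp B).erase p)) := by
      rintro ⟨_, _, h3⟩
      rw [h3] at h
      simp at h; omega
    rw [if_neg h2, mul_zero]
  · rw [if_neg (by tauto), zero_mul]

/-- The vertical operator `(1 + y u_0) ⋯ (1 + y u_{m-1})`: the largest position acts first. -/
def Vop (n C : ℕ) (q y : R) : ℕ → Mat C R
  | 0 => 1
  | m + 1 => Vop n C q y m * (1 + y • u n C q m)

/-- The horizontal operator `(1 + x u_{m-1}) ⋯ (1 + x u_0)`: the smallest position acts first. -/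
def Hop (n C : ℕ) (q x : R) : ℕ → Mat C R
  | 0 => 1
  | m + 1 => (1 + x • u n C q m) * Hop n C q x m

/-- Since `u_p ^ 2 = 0`, the factors `1 - x u_p` and `1 + x u_p` are inverse to each other. -/
lemma Vop_mul_Hop {n : ℕ} (hn : 1 ≤ n) (C : ℕ) (q x : R) (m : ℕ) :
    Vop n C q (-x) m * Hop n C q x m = 1 := by
  induction m with
  | zero => simp [Vop, Hop]
  | succ m ih =>
    have h : (1 + (-x) • u n C q m) * (1 + x • u n C q m) = 1 := by
      rw [add_mul, mul_add, mul_add, smul_mul_smul_comm, u_mul_self hn]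
      simp
    rw [Vop, Hop, Matrix.mul_assoc, ← Matrix.mul_assoc (1 + (-x) • u n C q m), h, Matrix.one_mul, ih]

/-- A vertical row moves a set `S` of beads simultaneously: since the largest position acts first, no
moving bead interacts with another moving bead. -/
lemma Vop_apply {n : ℕ} (hn : 1 ≤ n) (C : ℕ) (q y : R) (m : ℕ) (B' B : Fin C → Bool) :
    Vop n C q y m B' B = ∑ S ∈ ((supp B).filter (· < m)).powerset,
      if supp B' = mv n (supp B) S then y ^ #S * Phi n q S (supp B \ S) else 0 := by
  induction m generalizing B' B with
  | zero =>
    simp only [Vop, not_lt_zero, filter_false, powerset_empty, sum_singleton, mv, shift, Phi,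
      Matrix.one_apply, supp_injective.eq_iff, sdiff_empty, image_empty, union_empty, card_empty,
      pow_zero, prod_empty, mul_one]
  | succ m ih =>
    rw [Vop, Matrix.mul_add, Matrix.mul_one, Matrix.add_apply, ih, Matrix.mul_smul,
      Matrix.smul_apply, Matrix.mul_apply]
    by_cases hm : m ∈ supp B
    · have hf : (supp B).filter (· < m + 1) = insert m ((supp B).filter (· < m)) := by
        ext k; simp only [mem_filter, mem_insert]
        constructor
        · rintro ⟨h1, h2⟩; by_cases h : k = m
          · exact Or.inl h
          · exact Or.inr ⟨h1, by omega⟩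
        · rintro (rfl | ⟨h1, h2⟩)
          · exact ⟨hm, by omega⟩
          · exact ⟨h1, by omega⟩
      rw [hf, Finset.sum_powerset_insert (by simp)]
      congr 1
      set X := insert (m + n) ((supp B).erase m) with hX
      by_cases hmn : m + n ∈ supp B
      · rw [Finset.sum_eq_zero, smul_zero, Finset.sum_eq_zero]
        · intro S hS
          have : Phi n q (insert m S) (supp B \ insert m S) = 0 := by
            apply Phi_eq_zero hn
            rw [Finset.not_disjoint_iff]
            refine ⟨m + n, ?_, add_mem_shift.2 (mem_insert_self _ _)⟩
            simp only [mem_sdiff, hmn, mem_insert, true_and]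
            rintro (h | h)
            · omega
            · have := (mem_filter.1 (mem_powerset.1 hS h)).2; omega
          rw [this]; simp
        · intro B1 _
          rw [u, if_neg (by tauto), mul_zero]
      have e1 : ∀ B1, Vop n C q y m B' B1 * u n C q m B1 B = if supp B1 = X then
          (∑ S ∈ ((supp B1).filter (· < m)).powerset,
            if supp B' = mv n (supp B1) S then y ^ #S * Phi n q S (supp B1 \ S) else 0) *
          q ^ #((supp B).filter fun b => m < b ∧ b < m + n) else 0 := by
        intro B1
        rw [u, ih]
        by_cases h : supp B1 = X
        · rw [if_pos ⟨hm, hmn, h⟩, if_pos h]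
        · rw [if_neg (by tauto), if_neg h, mul_zero]
      rw [Finset.sum_congr rfl fun B1 _ => e1 B1, sum_supp C X (fun Z =>
        (∑ S ∈ (Z.filter (· < m)).powerset,
            if supp B' = mv n Z S then y ^ #S * Phi n q S (Z \ S) else 0) *
          q ^ #((supp B).filter fun b => m < b ∧ b < m + n))]
      have hXf : X.filter (· < m) = (supp B).filter (· < m) := by
        ext k; simp only [hX, mem_filter, mem_insert, mem_erase]
        constructor
        · rintro ⟨rfl | h1, h2⟩
          · omega
          · exact ⟨h1.2, h2⟩
        · rintro ⟨h1, h2⟩; exact ⟨Or.inr ⟨by omega, h1⟩, h2⟩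
      have hmv : ∀ S ∈ ((supp B).filter (· < m)).powerset,
          mv n X S = mv n (supp B) (insert m S) := by
        intro S hS
        have hlt : ∀ k ∈ S, k < m := fun k hk => (mem_filter.1 (mem_powerset.1 hS hk)).2
        ext k
        simp only [mv, hX, mem_union, mem_sdiff, mem_insert, mem_erase, mem_shift]
        constructor
        · rintro (⟨rfl | h1, h2⟩ | ⟨s, hs, rfl⟩)
          · exact Or.inr ⟨m, Or.inl rfl, rfl⟩
          · exact Or.inl ⟨h1.2, by tauto⟩
          · exact Or.inr ⟨s, Or.inr hs, rfl⟩
        · rintro (⟨h1, h2⟩ | ⟨s, rfl | hs, rfl⟩)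
          · exact Or.inl ⟨Or.inr ⟨by tauto, h1⟩, by tauto⟩
          · exact Or.inl ⟨Or.inl rfl, fun h => by have := hlt _ h; omega⟩
          · exact Or.inr ⟨s, hs, rfl⟩
      split_ifs with hsub
      · rw [hXf, Finset.sum_mul, Finset.smul_sum]
        refine Finset.sum_congr rfl fun S hS => ?_
        have hlt : ∀ k ∈ S, k < m := fun k hk => (mem_filter.1 (mem_powerset.1 hS hk)).2
        have hmS : m ∉ S := fun h => lt_irrefl _ (hlt m h)
        rw [hmv S hS, smul_eq_mul, ite_mul, mul_ite, zero_mul, mul_zero]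
        refine if_congr Iff.rfl ?_ rfl
        have hXS : X \ S = insert (m + n) (supp B \ insert m S) := by
          ext k; simp only [hX, mem_sdiff, mem_insert, mem_erase]
          constructor
          · rintro ⟨rfl | h1, h2⟩
            · exact Or.inl rfl
            · exact Or.inr ⟨h1.2, by tauto⟩
          · rintro (rfl | ⟨h1, h2⟩)
            · exact ⟨Or.inl rfl, fun h => by have := hlt _ h; omega⟩
            · exact ⟨Or.inr ⟨by tauto, h1⟩, by tauto⟩
        rw [hXS, Phi_insert_right (by simp [hmn]), Phi_insert_left hmS, card_insert_of_notMem hmS,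
          Finset.prod_eq_one (fun s hs => phi_far (by have := hlt s hs; omega)),
          prod_eq_pow_card_filter (supp B \ insert m S) (phi n q m) q
            (fun b => m < b ∧ b < m + n) (fun t _ h => phi_near h.1 h.2)]
        · have : (supp B \ insert m S).filter (fun b => m < b ∧ b < m + n) =
              (supp B).filter (fun b => m < b ∧ b < m + n) := by
            ext k; simp only [mem_filter, mem_sdiff, mem_insert]
            constructor
            · tauto
            · rintro ⟨h1, h2⟩
              refine ⟨⟨h1, ?_⟩, h2⟩
              rintro (rfl | h)
              · omega
              · have := hlt _ h; omega
          rw [this]; ring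
        · intro t ht h
          by_cases h1 : t ≤ m
          · exact phi_of_le h1
          · refine phi_far ?_
            have : t ≠ m + n := by rintro rfl; exact hmn (mem_sdiff.1 ht).1
            omega
      · rw [smul_zero, Finset.sum_eq_zero]
        intro S hS
        rw [if_neg]
        intro h
        apply hsub
        have hB := supp_subset B'
        rw [h, ← hmv S hS] at hB
        intro k hk
        by_cases hkS : k ∈ S
        · exact supp_subset B (mem_filter.1 (mem_powerset.1 hS hkS)).1
        · exact hB (mem_union_left _ (mem_sdiff.2 ⟨hk, hkS⟩))
    · have hf : (supp B).filter (· < m + 1) = (supp B).filter (· < m) := by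
        ext k; simp only [mem_filter]
        constructor
        · rintro ⟨h1, h2⟩
          refine ⟨h1, ?_⟩
          have : k ≠ m := by rintro rfl; exact hm h1
          omega
        · rintro ⟨h1, h2⟩; exact ⟨h1, by omega⟩
      have h0 : ∑ j, Vop n C q y m B' j * u n C q m j B = 0 := by
        refine Finset.sum_eq_zero fun B1 _ => ?_
        rw [u, if_neg (by tauto), mul_zero]
      rw [hf, h0, smul_zero, add_zero]

lemma Vop_apply_full {n : ℕ} (hn : 1 ≤ n) (C : ℕ) (q y : R) (B' B : Fin C → Bool) :
    Vop n C q y C B' B = ∑ S ∈ (supp B).powerset,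
      if supp B' = mv n (supp B) S then y ^ #S * Phi n q S (supp B \ S) else 0 := by
  rw [Vop_apply hn, filter_true_of_mem fun k hk => lt_of_mem_supp hk]

lemma Vop_mul_apply {n : ℕ} (hn : 1 ≤ n) (C : ℕ) (q a b : R) (X B : Fin C → Bool) :
    (Vop n C q b C * Vop n C q a C) X B = twoMoves n q a b (supp B) (supp X) := by
  rw [Matrix.mul_apply]
  simp only [Vop_apply_full hn]
  simp only [Finset.mul_sum (s := (supp B).powerset)]
  rw [Finset.sum_comm]
  unfold twoMoves
  refine Finset.sum_congr rfl fun S _ => ?_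
  have e : ∀ B1 : Fin C → Bool, (∑ S ∈ (supp B1).powerset,
      if supp X = mv n (supp B1) S then b ^ #S * Phi n q S (supp B1 \ S) else 0) *
      (if supp B1 = mv n (supp B) S then a ^ #S * Phi n q S (supp B \ S) else 0) =
      if supp B1 = mv n (supp B) S then (∑ S ∈ (supp B1).powerset,
      if supp X = mv n (supp B1) S then b ^ #S * Phi n q S (supp B1 \ S) else 0) *
      (a ^ #S * Phi n q S (supp B \ S)) else 0 := by
    intro B1; rw [mul_ite, mul_zero]
  rw [Finset.sum_congr rfl fun B1 _ => e B1, sum_supp C _ (fun Z => (∑ S ∈ Z.powerset,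
      if supp X = mv n Z S then b ^ #S * Phi n q S (Z \ S) else 0) *
      (a ^ #S * Phi n q S (supp B \ S)))]
  split_ifs with h
  · rw [Finset.sum_mul]
    refine Finset.sum_congr rfl fun S' _ => ?_
    rw [ite_mul, zero_mul, mul_comm]
  · symm
    refine Finset.sum_eq_zero fun S' hS' => ?_
    rw [if_neg]
    intro hX
    apply h
    have hB := supp_subset X
    rw [hX] at hB
    intro k hk
    by_cases hkS : k ∈ S'
    · have := mem_range.1 (hB (mem_union_right _ (add_mem_shift.2 hkS)))
      exact mem_range.2 (by omega)
    · exact hB (mem_union_left _ (mem_sdiff.2 ⟨hk, hkS⟩))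

lemma Vop_commute {n : ℕ} (hn : 1 ≤ n) (C : ℕ) (q a b : R) :
    Commute (Vop n C q a C) (Vop n C q b C) := by
  ext X B
  rw [Vop_mul_apply hn, Vop_mul_apply hn, twoMoves_comm hn]

lemma commute_of_inv {M : Type*} [Monoid M] {v h w : M} (h1 : v * h = 1) (h2 : h * v = 1)
    (hc : Commute v w) : Commute h w := by
  have : h * w * (v * h) = h * v * (w * h) := by
    simp only [mul_assoc]; rw [← mul_assoc w v h, ← hc.eq, mul_assoc]
  rwa [h1, h2, mul_one, one_mul] at this

/-- The operator of a row with data `hz`: horizontal with parameter `hz.2` if `hz.1` holds, and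
otherwise vertical with parameter `-hz.2`. -/
def rowOp (n C : ℕ) (q : R) (hz : Bool × R) : Mat C R :=
  if hz.1 then Hop n C q hz.2 C else Vop n C q (-hz.2) C

/-- Vertical operators commute by `twoMoves_comm`, and horizontal ones are inverses of vertical
ones. -/
lemma rowOp_commute {n : ℕ} (hn : 1 ≤ n) (C : ℕ) (q : R) (a b : Bool × R) :
    Commute (rowOp n C q a) (rowOp n C q b) := by
  have h1 := fun x => Vop_mul_Hop hn C q x C
  have h2 : ∀ x, Hop n C q x C * Vop n C q (-x) C = 1 := fun x =>
    mul_eq_one_comm.1 (h1 x)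
  have h3 := fun x y => commute_of_inv (h1 x) (h2 x) (Vop_commute hn C q (-x) y)
  have h4 := fun x y => commute_of_inv (h1 x) (h2 x) (h3 y (-x)).symm
  rcases a with ⟨_ | _, a⟩ <;> rcases b with ⟨_ | _, b⟩ <;> simp only [rowOp, if_true, Bool.false_eq_true, if_false]
  · exact Vop_commute hn C q _ _
  · exact (h3 _ _).symm
  · exact h3 _ _
  · exact h4 _ _

/-- The condition that bead moves from the positions in `J`, performed from left to right, lead from
the configuration `B` to `B'`: no target is occupied in `B`, and each position of `J` is occupied in
`B` or is the target of an earlier move. -/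
def HorizOK (n : ℕ) (B' B J : Finset ℕ) : Prop :=
  Disjoint B (shift n J) ∧ J ⊆ B ∪ shift n J ∧ B' = (B ∪ shift n J) \ J

instance (n : ℕ) (B' B J : Finset ℕ) : Decidable (HorizOK n B' B J) := by
  unfold HorizOK; infer_instance

/-- The exponent of `q` in a horizontal row: the number of pairs of a move from `j ∈ J` and a bead,
in `B` or brought in by a move, strictly jumped over by it. -/
def horizExp (n : ℕ) (B J : Finset ℕ) : ℕ :=
  ∑ c ∈ B ∪ shift n J, #(J.filter fun j => j < c ∧ c < j + n)

/-- A horizontal row performs bead moves from a set `J` of positions, the smallest first, so that a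
bead may be moved several times in succession. -/
lemma Hop_apply {n : ℕ} (hn : 1 ≤ n) (C : ℕ) (q x : R) (m : ℕ) (B' B : Fin C → Bool) :
    Hop n C q x m B' B = ∑ J ∈ (range m).powerset,
      if HorizOK n (supp B') (supp B) J then x ^ #J * q ^ horizExp n (supp B) J else 0 := by
  induction m generalizing B' with
  | zero =>
    simp [Hop, HorizOK, shift, horizExp, Matrix.one_apply, supp_injective.eq_iff]
  | succ m ih =>
    rw [Hop, Matrix.add_mul, Matrix.one_mul, Matrix.add_apply, ih, Matrix.smul_mul,
      Matrix.smul_apply, Matrix.mul_apply, range_add_one, Finset.sum_powerset_insert (by simp)]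
    congr 1
    simp only [ih, Finset.mul_sum]
    rw [Finset.sum_comm, Finset.smul_sum]
    refine Finset.sum_congr rfl fun J hJ => ?_
    have hlt : ∀ k ∈ J, k < m := fun k hk => mem_range.1 (mem_powerset.1 hJ hk)
    have hmJ : m ∉ J := fun h => lt_irrefl _ (hlt m h)
    have hmn : m + n ∉ shift n J := fun h => hmJ (add_mem_shift.1 h)
    set Y := supp B ∪ shift n J with hY
    have hY' : supp B ∪ shift n (insert m J) = insert (m + n) Y := by
      ext k; simp only [hY, mem_union, mem_shift, mem_insert]
      constructor
      · rintro (h | ⟨s, rfl | hs, rfl⟩)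
        · exact Or.inr (Or.inl h)
        · exact Or.inl rfl
        · exact Or.inr (Or.inr ⟨s, hs, rfl⟩)
      · rintro (rfl | h | ⟨s, hs, rfl⟩)
        · exact Or.inr ⟨m, Or.inl rfl, rfl⟩
        · exact Or.inl h
        · exact Or.inr ⟨s, Or.inr hs, rfl⟩
    by_cases hA : Disjoint (supp B) (shift n J) ∧ J ⊆ Y
    swap
    · rw [if_neg, Finset.sum_eq_zero, smul_zero]
      · intro B1 _; rw [if_neg, mul_zero]
        rintro ⟨h1, h2, _⟩; exact hA ⟨h1, h2⟩
      · rintro ⟨h1, h2, _⟩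
        refine hA ⟨disjoint_of_subset_right (image_subset_image (subset_insert _ _)) h1, ?_⟩
        intro k hk
        rw [hY'] at h2
        have := mem_insert.1 (h2 (mem_insert_of_mem hk))
        have := hlt k hk
        rcases ‹_ ∨ _› with h | h
        · omega
        · exact h
    have e : ∀ B1 : Fin C → Bool, u n C q m B' B1 *
        (if HorizOK n (supp B1) (supp B) J then x ^ #J * q ^ horizExp n (supp B) J else 0) =
        if supp B1 = Y \ J then
          (if m ∈ supp B1 ∧ m + n ∉ supp B1 ∧ supp B' = insert (m + n) ((supp B1).erase m) then
    q ^ #((supp B1).filter fun b => m < b ∧ b < m + n) else 0) *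
          (x ^ #J * q ^ horizExp n (supp B) J) else 0 := by
      intro B1
      rw [mul_ite, mul_zero]
      refine if_congr ?_ rfl rfl
      exact ⟨fun h => h.2.2, fun h => ⟨hA.1, hA.2, h⟩⟩
    rw [Finset.sum_congr rfl fun B1 _ => e B1, sum_supp C _ (fun Z =>
          (if m ∈ Z ∧ m + n ∉ Z ∧ supp B' = insert (m + n) (Z.erase m) then
    q ^ #(Z.filter fun b => m < b ∧ b < m + n) else 0) *
          (x ^ #J * q ^ horizExp n (supp B) J)), ite_mul, zero_mul, ← ite_and, smul_ite, smul_zero]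
    have hset : insert (m + n) Y \ insert m J = insert (m + n) ((Y \ J).erase m) := by
      ext k; simp only [mem_sdiff, mem_insert, mem_erase]
      constructor
      · tauto
      · rintro (rfl | h)
        · refine ⟨Or.inl rfl, ?_⟩
          rintro (h | h)
          · omega
          · have := hlt _ h; omega
        · tauto
    have hiff : (Y \ J ⊆ range C ∧ m ∈ Y \ J ∧ m + n ∉ Y \ J ∧
        supp B' = insert (m + n) ((Y \ J).erase m)) ↔
        HorizOK n (supp B') (supp B) (insert m J) := by
      unfold HorizOK
      rw [hY', hset]
      constructor
      · rintro ⟨_, h1, h2, h3⟩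
        have hmnB : m + n ∉ supp B := fun h => h2 (mem_sdiff.2 ⟨mem_union_left _ h, fun h => by
          have := hlt _ h; omega⟩)
        refine ⟨?_, ?_, h3⟩
        · rw [Finset.disjoint_left]
          intro k hk hk'
          obtain ⟨s, hs, rfl⟩ := mem_shift.1 hk'
          rcases mem_insert.1 hs with rfl | hs
          · exact hmnB hk
          · exact Finset.disjoint_left.1 hA.1 hk (add_mem_shift.2 hs)
        · intro k hk
          rcases mem_insert.1 hk with rfl | hk
          · exact mem_insert_of_mem (mem_sdiff.1 h1).1
          · exact mem_insert_of_mem (hA.2 hk)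
      · rintro ⟨h1, h2, h3⟩
        have hm : m ∈ Y := by
          rcases mem_insert.1 (h2 (mem_insert_self m J)) with h | h
          · omega
          · exact h
        have hmY : m ∈ Y \ J := mem_sdiff.2 ⟨hm, hmJ⟩
        have hC : m + n < C := lt_of_mem_supp (B := B') (by rw [h3]; exact mem_insert_self _ _)
        refine ⟨fun k hk => ?_, hmY, fun h => ?_, h3⟩
        · by_cases hkm : k = m
          · subst hkm; exact mem_range.2 (by omega)
          · apply supp_subset B'
            rw [h3]; exact mem_insert_of_mem (mem_erase.2 ⟨hkm, hk⟩)
        · rcases mem_union.1 (mem_sdiff.1 h).1 with h | h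
          · exact Finset.disjoint_left.1 h1 h (add_mem_shift.2 (mem_insert_self _ _))
          · exact hmn h
    refine ite_congr (propext hiff) (fun hok => ?_) (fun _ => rfl)
    have hmnY : m + n ∉ Y := by
      intro h
      rcases mem_union.1 h with h | h
      · exact Finset.disjoint_left.1 hok.1 h (add_mem_shift.2 (mem_insert_self _ _))
      · exact hmn h
    have hexp : horizExp n (supp B) (insert m J) = horizExp n (supp B) J +
        #((Y \ J).filter fun b => m < b ∧ b < m + n) := by
      unfold horizExp
      rw [hY', sum_insert hmnY, ← hY]
      have z : #((insert m J).filter fun j => j < m + n ∧ m + n < j + n) = 0 := by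
        rw [card_eq_zero, filter_eq_empty_iff]
        intro k hk
        rcases mem_insert.1 hk with rfl | hk
        · omega
        · have := hlt k hk; omega
      have f : (Y \ J).filter (fun b => m < b ∧ b < m + n) =
          Y.filter (fun b => m < b ∧ b < m + n) := by
        ext k; simp only [mem_filter, mem_sdiff]
        constructor
        · tauto
        · rintro ⟨h1, h2⟩; exact ⟨⟨h1, fun h => by have := hlt k h; omega⟩, h2⟩
      rw [z, zero_add, f, card_filter, ← sum_add_distrib]
      refine sum_congr rfl fun c _ => ?_
      rw [filter_insert]
      split_ifs with h
      · rw [card_insert_of_notMem (by simp [hmJ])]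
      · rw [add_zero]
    rw [hexp, card_insert_of_notMem hmJ, smul_eq_mul]
    ring
end
end SuperLLT

/-! ### The partition function as a product of row operators -/

namespace SuperLLT

/-- The horizontal edge labels of a row: label `k` of edge `e` is `>` iff `e + k - n ∈ J`. -/
def hOf (n C : ℕ) (J : Finset ℕ) (e : Fin (C + 1)) (k : Fin n) : Bool :=
  decide (∀ j ∈ J, j + n ≠ e.val + k.val)

section
variable {R : Type*} [CommRing R]

/-- The weight of a vertex in terms of its type data and the number `t` of `>` labels. -/
def typeWeight (n : ℕ) (tab : VertexType → ℕ → R) (vN vS w e : Bool) (t : ℕ) : R :=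
  match classify vN vS w e with
  | some ty => tab ty (n - 1 - t)
  | none => 0

/-- The number of `>` labels among the first `n - 1` labels east of column `c`. -/
def tcount (n : ℕ) (J : Finset ℕ) (c : ℕ) : ℕ := #(J.filter fun j => j < c ∧ c < j + n)

lemma count_true {n : ℕ} (C : ℕ) (J : Finset ℕ) (c : Fin C) :
    #(univ.filter fun k : Fin n => k.val < n - 1 ∧ hOf n C J c.succ k = true) =
      n - 1 - tcount n J c := by
  have h1 : #(univ.filter fun k : Fin n => k.val < n - 1) = n - 1 := by
    rw [Fin.card_filter_val_lt]; omega
  have h2 : #(univ.filter fun k : Fin n => k.val < n - 1 ∧ hOf n C J c.succ k = true) +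
      #(univ.filter fun k : Fin n => k.val < n - 1 ∧ ¬ hOf n C J c.succ k = true) = n - 1 := by
    have := card_filter_add_card_filter_not (s := univ.filter fun k : Fin n => k.val < n - 1)
      (fun k => hOf n C J c.succ k = true)
    rw [filter_filter, filter_filter] at this
    exact this.trans h1
  have h3 : #(univ.filter fun k : Fin n => k.val < n - 1 ∧ ¬ hOf n C J c.succ k = true) =
      tcount n J c := by
    unfold tcount
    refine Finset.card_bij' (fun k _ => c.val + 1 + k.val - n)
      (fun j hj => ⟨j + n - c.val - 1, by simp at hj; omega⟩) ?_ ?_ ?_ ?_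
    · intro k hk
      simp only [mem_filter, mem_univ, true_and, hOf, decide_eq_true_eq, ne_eq, not_forall,
        not_not, Fin.val_succ] at hk ⊢
      obtain ⟨hk, j, hj, he⟩ := hk
      have : c.val + 1 + k.val - n = j := by omega
      rw [this]; exact ⟨hj, by omega, by omega⟩
    · intro j hj
      simp only [mem_filter, mem_univ, true_and, hOf, decide_eq_true_eq, ne_eq, not_forall,
        not_not, Fin.val_succ] at hj ⊢
      refine ⟨by omega, j, hj.1, by omega⟩
    · intro k hk
      simp only [mem_filter, mem_univ, true_and, hOf, decide_eq_true_eq, ne_eq, not_forall,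
        not_not, Fin.val_succ] at hk ⊢
      obtain ⟨hk, j, hj, he⟩ := hk
      ext; simp only; omega
    · intro j hj
      simp only [mem_filter] at hj
      simp only; omega
  omega

lemma tcount_le (n : ℕ) (J : Finset ℕ) (c : ℕ) : tcount n J c ≤ n - 1 := by
  have : J.filter (fun j => j < c ∧ c < j + n) ⊆ Ico (c + 1 - n) c := by
    intro j hj
    simp only [mem_filter, mem_Ico] at *
    omega
  have := card_le_card this
  rw [Nat.card_Ico] at this
  unfold tcount; omega

lemma vertexWeight_hOf {n : ℕ} (hn : 1 ≤ n) (C : ℕ) (tab : VertexType → ℕ → R) (J : Finset ℕ)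
    (vN vS : Bool) (c : Fin C) :
    vertexWeight n tab vN vS (hOf n C J c.castSucc) (hOf n C J c.succ) =
      typeWeight n tab vN vS (decide (c.val ∉ shift n J)) (decide (c.val ∉ J))
        (tcount n J c) := by
  have hw : hOf n C J c.castSucc ⟨0, hn⟩ = decide (c.val ∉ shift n J) := by
    unfold hOf
    rw [decide_eq_decide, mem_shift]
    simp
  have he : hOf n C J c.succ ⟨n - 1, Nat.sub_lt hn Nat.one_pos⟩ = decide (c.val ∉ J) := by
    unfold hOf
    rw [decide_eq_decide]
    simp only [Fin.val_succ]
    constructor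
    · intro h hc; exact h _ hc (by omega)
    · intro h j hj he
      exact h ((by omega : j = c.val) ▸ hj)
  unfold vertexWeight typeWeight
  rw [dif_pos (show 0 < n from hn), if_pos]
  · rw [hw, he, count_true]
  · intro k hk
    unfold hOf
    rw [decide_eq_decide]
    simp only [Fin.val_succ, Fin.val_castSucc]
    have : c.val + 1 + k.val = c.val + (k.val + 1) := by omega
    rw [this]

open scoped Classical in
/-- The contribution of one row of the lattice with vertical labels `vN` above and `vS` below and
all outer horizontal labels `<`. -/
noncomputable def rowSum (n C : ℕ) (tab : VertexType → ℕ → R) (vN vS : Fin C → Bool) : R :=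
  ∑ h ∈ univ.filter (fun h : Fin (C + 1) → Fin n → Bool =>
      h 0 = (fun _ => true) ∧ h (Fin.last C) = fun _ => true),
    ∏ c : Fin C, vertexWeight n tab (vN c) (vS c) (h c.castSucc) (h c.succ)

/-- Because labels are carried from left to right through the tuples, a row state is determined by the
set `J` of columns at which a label `>` enters the tuple; it leaves it `n` columns further right. -/
lemma rowSum_eq {n : ℕ} (hn : 1 ≤ n) (C : ℕ) (tab : VertexType → ℕ → R) (vN vS : Fin C → Bool) :
    rowSum n C tab vN vS = ∑ J ∈ (range C).powerset.filter (fun J => ∀ j ∈ J, j + n < C),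
      ∏ c : Fin C, typeWeight n tab (vN c) (vS c) (decide (c.val ∉ shift n J))
        (decide (c.val ∉ J)) (tcount n J c) := by
  classical
  unfold rowSum
  symm
  refine Finset.sum_of_injOn (hOf n C) ?_ ?_ ?_ ?_
  · intro J hJ J' hJ' h
    simp only [coe_filter, mem_powerset, Set.mem_ofPred_eq] at hJ hJ'
    have key : ∀ K : Finset ℕ, ∀ k : ℕ, ∀ hk : k < C,
        hOf n C K ⟨k + 1, by omega⟩ ⟨n - 1, by omega⟩ = decide (k ∉ K) := by
      intro K k hk
      unfold hOf
      rw [decide_eq_decide]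
      constructor
      · intro h hc; exact h _ hc (by simp only; omega)
      · intro h j hj he
        simp only at he
        exact h ((by omega : j = k) ▸ hj)
    ext k
    by_cases hk : k < C
    · have h1 := key J k hk
      rw [h, key J' k hk, decide_eq_decide] at h1
      tauto
    · exact ⟨fun h => absurd (mem_range.1 (hJ.1 h)) hk, fun h => absurd (mem_range.1 (hJ'.1 h)) hk⟩
  · intro J hJ
    simp only [coe_filter, mem_powerset, Set.mem_ofPred_eq, mem_univ, true_and] at hJ ⊢
    constructor
    · funext k
      simp only [hOf, decide_eq_true_eq]
      intro j hj
      have := k.2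
      simp only [Fin.val_zero]; omega
    · funext k
      simp only [hOf, decide_eq_true_eq]
      intro j hj
      have := hJ.2 j hj
      simp only [Fin.val_last]; omega
  · intro h hh hnot
    simp only [mem_filter, mem_univ, true_and] at hh
    by_contra hne
    apply hnot
    have hsh : ∀ c : Fin C, ∀ k : Fin n, ∀ hk : k.val + 1 < n,
        h c.succ k = h c.castSucc ⟨k.val + 1, hk⟩ := by
      intro c
      by_contra hc
      apply hne
      refine Finset.prod_eq_zero (mem_univ c) ?_
      unfold vertexWeight
      rw [dif_pos (show 0 < n from hn), if_neg hc]
    set J : Finset ℕ := (univ.filter fun c : Fin C => h c.succ ⟨n - 1, by omega⟩ = false).map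
      Fin.valEmbedding with hJ
    have hmemJ : ∀ k, k ∈ J ↔ ∃ hk : k < C, h ⟨k + 1, by omega⟩ ⟨n - 1, by omega⟩ = false := by
      intro k
      simp only [hJ, mem_map, mem_filter, mem_univ, true_and, Fin.valEmbedding_apply]
      constructor
      · rintro ⟨a, h, rfl⟩; exact ⟨a.2, h⟩
      · rintro ⟨h, h'⟩; exact ⟨⟨k, h⟩, h', rfl⟩
    have heq : ∀ e : ℕ, ∀ he : e < C + 1, ∀ k : Fin n, h ⟨e, he⟩ k = hOf n C J ⟨e, he⟩ k := by
      intro e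
      induction e with
      | zero =>
        intro he k
        have : h ⟨0, he⟩ = fun _ => true := hh.1
        rw [this]
        symm
        simp only [hOf, decide_eq_true_eq]
        intro j hj
        have := k.2
        omega
      | succ e ih =>
        intro he k
        by_cases hk : k.val + 1 < n
        · have := hsh ⟨e, by omega⟩ k hk
          simp only [Fin.succ_mk, Fin.castSucc_mk] at this
          rw [this, ih]
          unfold hOf
          rw [decide_eq_decide]
          simp only
          have : e + 1 + k.val = e + (k.val + 1) := by omega
          rw [this]
        · have hk' : k = ⟨n - 1, Nat.sub_lt hn Nat.one_pos⟩ := by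
            ext; simp only; omega
          rw [hk']
          unfold hOf
          have h1 := hmemJ e
          have hC : e < C := by omega
          simp only [hC, exists_true_left] at h1
          have h2 : (∀ j ∈ J, j + n ≠ e + 1 + (n - 1)) ↔ e ∉ J := by
            constructor
            · intro h hc; exact h _ hc (by omega)
            · intro h j hj he
              exact h ((by omega : j = e) ▸ hj)
          rw [decide_eq_decide.2 h2, Bool.eq_iff_iff, decide_eq_true_eq, h1, Bool.not_eq_false]
    have heq' : hOf n C J = h := by
      funext e k; exact (heq e.val e.2 k).symm
    refine ⟨J, ?_, heq'⟩
    simp only [coe_filter, mem_powerset, Set.mem_ofPred_eq]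
    refine ⟨fun k hk => mem_range.2 ((hmemJ k).1 hk).1, fun j hj => ?_⟩
    have hjC := ((hmemJ j).1 hj).1
    by_contra hlt
    have h1 : hOf n C J (Fin.last C) ⟨j + n - C, by omega⟩ = true := by rw [heq', hh.2]
    simp only [hOf, decide_eq_true_eq] at h1
    exact h1 j hj (by simp only [Fin.val_last]; omega)
  · intro J hJ
    exact Finset.prod_congr rfl fun c _ => (vertexWeight_hOf hn C tab J _ _ c).symm

lemma phi_prod {n : ℕ} (q : R) (J : Finset ℕ) (c : ℕ) (h : c ∉ shift n J) :
    ∏ s ∈ J, phi n q s c = q ^ tcount n J c := by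
  unfold tcount
  refine prod_eq_pow_card_filter _ _ _ _ (fun s _ h => phi_near h.1 h.2) (fun s hs h' => ?_)
  by_cases h1 : c ≤ s
  · exact phi_of_le h1
  · refine phi_far ?_
    have : c ≠ s + n := by rintro rfl; exact h (add_mem_shift.2 hs)
    omega

lemma typeWeight_vert {n : ℕ} (hn : 1 ≤ n) (q y : R) (J S : Finset ℕ) (c : ℕ) (S' : Finset ℕ) :
    typeWeight n (altVertTable n q y) (decide (c ∈ S')) (decide (c ∈ S)) (decide (c ∉ shift n J))
      (decide (c ∉ J)) (tcount n J c) =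
    if (c ∈ J → c ∈ S) ∧ (c ∈ S' ↔ c ∈ mv n S J) then
      (if c ∈ J then -y else 1) * (if c ∈ S \ J then ∏ s ∈ J, phi n q s c else 1) else 0 := by
  have ht : n - 1 - (n - 1 - tcount n J c) = tcount n J c := by
    have := tcount_le n J c; omega
  have hp := phi_prod (n := n) q J c
  have hz : c ∈ shift n J → ∏ s ∈ J, phi n q s c = 0 := by
    intro h
    obtain ⟨s, hs, rfl⟩ := mem_shift.1 h
    exact Finset.prod_eq_zero hs (by simp [phi, show 0 < n from hn])
  by_cases h1 : c ∈ S <;> by_cases h2 : c ∈ shift n J <;> by_cases h3 : c ∈ J <;> by_cases h4 : c ∈ S' <;>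
    simp [typeWeight, classify, altVertTable, mv, h1, h2, h3, h4, ht, hp, hz]

lemma typeWeight_horiz {n : ℕ} (q x : R) (J S : Finset ℕ) (c : ℕ) (S' : Finset ℕ) :
    typeWeight n (altHorizTable n q x) (decide (c ∈ S')) (decide (c ∈ S)) (decide (c ∉ shift n J))
      (decide (c ∉ J)) (tcount n J c) =
    if ¬ (c ∈ S ∧ c ∈ shift n J) ∧ (c ∈ J → c ∈ S ∪ shift n J) ∧
        (c ∈ S' ↔ c ∈ (S ∪ shift n J) \ J) then
      (if c ∈ J then x else 1) * (if c ∈ S ∪ shift n J then q ^ tcount n J c else 1) else 0 := by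
  have ht : n - 1 - (n - 1 - tcount n J c) = tcount n J c := by
    have := tcount_le n J c; omega
  by_cases h1 : c ∈ S <;> by_cases h2 : c ∈ shift n J <;> by_cases h3 : c ∈ J <;> by_cases h4 : c ∈ S' <;>
    simp [typeWeight, classify, altHorizTable, h1, h2, h3, h4, ht, mul_comm]

lemma decide_mem_supp {C : ℕ} (B : Fin C → Bool) (c : Fin C) :
    B c = decide (c.val ∈ supp B) := by
  rw [Bool.eq_iff_iff]; simp [mem_supp]

lemma prod_ite_range {C : ℕ} (P : ℕ → Prop) [DecidablePred P] (f : ℕ → R) :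
    ∏ c : Fin C, (if P c then f c else 0) =
      if ∀ c < C, P c then ∏ c ∈ range C, f c else 0 := by
  rw [Fin.prod_univ_eq_prod_range (fun c => if P c then f c else 0)]
  split_ifs with h
  · exact Finset.prod_congr rfl fun c hc => if_pos (h c (mem_range.1 hc))
  · push Not at h
    obtain ⟨c, hc, hP⟩ := h
    exact Finset.prod_eq_zero (mem_range.2 hc) (if_neg hP)

lemma prod_range_ite {C : ℕ} {A : Finset ℕ} (hA : A ⊆ range C) (f : ℕ → R) :
    ∏ c ∈ range C, (if c ∈ A then f c else 1) = ∏ c ∈ A, f c := by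
  rw [← Finset.prod_filter]
  congr 1
  ext k; simp only [mem_filter]
  exact ⟨fun h => h.2, fun h => ⟨hA h, h⟩⟩

lemma shift_subset {n C : ℕ} {J : Finset ℕ} (h : ∀ j ∈ J, j + n < C) : shift n J ⊆ range C := by
  intro k hk
  obtain ⟨s, hs, rfl⟩ := mem_shift.1 hk
  exact mem_range.2 (h s hs)

lemma rowSum_vert {n : ℕ} (hn : 1 ≤ n) (C : ℕ) (q y : R) (B' B : Fin C → Bool) :
    rowSum n C (altVertTable n q y) B' B = Vop n C q (-y) C B' B := by
  rw [rowSum_eq hn, Vop_apply_full hn]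
  have e : ∑ S ∈ (supp B).powerset, (if supp B' = mv n (supp B) S then
        (-y) ^ #S * Phi n q S (supp B \ S) else 0) =
      ∑ S ∈ (range C).powerset, if S ⊆ supp B ∧ supp B' = mv n (supp B) S then
        (-y) ^ #S * Phi n q S (supp B \ S) else 0 := by
    simp only [ite_and]
    rw [← Finset.sum_filter (p := fun S => S ⊆ supp B)]
    refine Finset.sum_congr ?_ fun _ _ => rfl
    ext S; simp only [mem_filter, mem_powerset]
    exact ⟨fun h => ⟨h.trans (supp_subset B), h⟩, fun h => h.2⟩
  rw [e, Finset.sum_filter]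
  refine Finset.sum_congr rfl fun J hJ => ?_
  rw [mem_powerset] at hJ
  by_cases h1 : ∀ j ∈ J, j + n < C
  · rw [if_pos h1, Finset.prod_congr rfl fun c _ => by
      rw [decide_mem_supp B c, decide_mem_supp B' c, typeWeight_vert hn],
      prod_ite_range (fun c => (c ∈ J → c ∈ supp B) ∧ (c ∈ supp B' ↔ c ∈ mv n (supp B) J))
        (fun c => (if c ∈ J then -y else 1) *
          (if c ∈ supp B \ J then ∏ s ∈ J, phi n q s c else 1)),
      Finset.prod_mul_distrib, prod_range_ite hJ,
      prod_range_ite (sdiff_subset.trans (supp_subset B)), Finset.prod_const]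
    refine if_congr ?_ ?_ rfl
    · constructor
      · intro h
        refine ⟨fun k hk => (h k (mem_range.1 (hJ hk))).1 hk, ?_⟩
        ext k
        by_cases hk : k < C
        · exact (h k hk).2
        · refine iff_of_false (fun h => hk (lt_of_mem_supp h)) (fun h => hk ?_)
          rcases mem_union.1 h with h | h
          · exact lt_of_mem_supp (mem_sdiff.1 h).1
          · exact mem_range.1 (shift_subset h1 h)
      · rintro ⟨h2, h3⟩ c _
        exact ⟨fun h => h2 h, by rw [h3]⟩
    · rw [Phi, Finset.prod_comm]
  · rw [if_neg h1, if_neg]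
    rintro ⟨h2, h3⟩
    apply h1
    intro j hj
    refine lt_of_mem_supp (B := B') ?_
    rw [h3]
    exact mem_union_right _ (add_mem_shift.2 hj)

lemma rowSum_horiz {n : ℕ} (hn : 1 ≤ n) (C : ℕ) (q x : R) (B' B : Fin C → Bool) :
    rowSum n C (altHorizTable n q x) B' B = Hop n C q x C B' B := by
  rw [rowSum_eq hn, Hop_apply hn, Finset.sum_filter]
  refine Finset.sum_congr rfl fun J hJ => ?_
  rw [mem_powerset] at hJ
  by_cases h1 : ∀ j ∈ J, j + n < C
  · rw [if_pos h1, Finset.prod_congr rfl fun c _ => by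
      rw [decide_mem_supp B c, decide_mem_supp B' c, typeWeight_horiz],
      prod_ite_range (fun c => ¬ (c ∈ supp B ∧ c ∈ shift n J) ∧
        (c ∈ J → c ∈ supp B ∪ shift n J) ∧ (c ∈ supp B' ↔ c ∈ (supp B ∪ shift n J) \ J))
        (fun c => (if c ∈ J then x else 1) *
          (if c ∈ supp B ∪ shift n J then q ^ tcount n J c else 1)),
      Finset.prod_mul_distrib, prod_range_ite hJ,
      prod_range_ite (union_subset (supp_subset B) (shift_subset h1)), Finset.prod_const,
      Finset.prod_pow_eq_pow_sum]
    refine if_congr ?_ rfl rfl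
    unfold HorizOK
    constructor
    · intro h
      refine ⟨?_, fun k hk => (h k (mem_range.1 (hJ hk))).2.1 hk, ?_⟩
      · rw [Finset.disjoint_left]
        intro k hk hk'
        exact (h k (lt_of_mem_supp hk)).1 ⟨hk, hk'⟩
      · ext k
        by_cases hk : k < C
        · exact (h k hk).2.2
        · refine iff_of_false (fun h => hk (lt_of_mem_supp h)) (fun h => hk ?_)
          rcases mem_union.1 (mem_sdiff.1 h).1 with h | h
          · exact lt_of_mem_supp h
          · exact mem_range.1 (shift_subset h1 h)
    · rintro ⟨h2, h3, h4⟩ c _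
      exact ⟨fun h => Finset.disjoint_left.1 h2 h.1 h.2, fun h => h3 h, by rw [h4]⟩
  · rw [if_neg h1, if_neg]
    rintro ⟨h2, h3, h4⟩
    apply h1
    intro j hj
    by_cases hjn : j + n ∈ J
    · exact mem_range.1 (hJ hjn)
    refine lt_of_mem_supp (B := B') ?_
    rw [h4]
    exact mem_sdiff.2 ⟨mem_union_right _ (add_mem_shift.2 hj), hjn⟩

/-- The alternate weight table of a row. -/
def rowTab (n : ℕ) (q : R) (hz : Bool × R) : VertexType → ℕ → R :=
  if hz.1 then altHorizTable n q hz.2 else altVertTable n q hz.2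

lemma rowSum_rowTab {n : ℕ} (hn : 1 ≤ n) (C : ℕ) (q : R) (hz : Bool × R) :
    rowSum n C (rowTab n q hz) = rowOp n C q hz := by
  funext B' B
  unfold rowTab rowOp
  split_ifs
  · exact rowSum_horiz hn C q _ B' B
  · exact rowSum_vert hn C q _ B' B

/-- A sum over paths with fixed end points is a matrix coefficient of a product. -/
lemma path_sum {ι : Type*} [Fintype ι] [DecidableEq ι] (m : ℕ) (M : Fin m → Matrix ι ι R)
    (a b : ι) :
    ∑ f : Fin (m + 1) → ι, (if f 0 = a ∧ f (Fin.last m) = b then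
      ∏ r : Fin m, M r (f r.castSucc) (f r.succ) else 0) = (List.ofFn M).prod a b := by
  induction m generalizing a with
  | zero =>
    rw [Fintype.sum_equiv (Equiv.funUnique (Fin 1) ι) _
      (fun i => if i = a ∧ i = b then (1 : R) else 0) (fun f => by
        simp [Equiv.funUnique])]
    simp only [ite_and, Finset.sum_ite_eq', mem_univ, if_true, List.ofFn_zero, List.prod_nil,
      Matrix.one_apply]
  | succ m ih =>
    rw [List.ofFn_succ, List.prod_cons, Matrix.mul_apply]
    simp only [← ih]
    rw [Fintype.sum_equiv (Fin.consEquiv (fun _ => ι)).symm _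
      (fun p : ι × (Fin (m + 1) → ι) => if p.1 = a ∧ p.2 (Fin.last m) = b then
        M 0 p.1 (p.2 0) * ∏ r : Fin m, M r.succ (p.2 r.castSucc) (p.2 r.succ) else 0)]
    · rw [Fintype.sum_prod_type]
      simp only [ite_and]
      rw [Finset.sum_eq_single a]
      · simp only [if_true, Finset.mul_sum, mul_ite, mul_zero]
        rw [Finset.sum_comm]
        refine Finset.sum_congr rfl fun f _ => ?_
        rw [Finset.sum_ite_eq, if_pos (mem_univ _)]
      · intro i _ hi; simp [hi]
      · simp
    · intro f
      simp only [Fin.consEquiv, Equiv.coe_fn_symm_mk]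
      rw [Fin.prod_univ_succ]
      rfl

/-- The rows of the lattice are transfer matrices; the bottom boundary is acted on first by the
bottom row. -/
theorem partitionZ_eq {n : ℕ} (hn : 1 ≤ n) (m C : ℕ) (q : R) (hz : Fin m → Bool × R)
    (top bottom : Fin C → Bool) :
    partitionZ n m C (fun i => rowTab n q (hz i)) top bottom (fun _ _ => true) (fun _ _ => true) =
      (List.ofFn fun i => rowOp n C q (hz i)).prod top bottom := by
  classical
  rw [← path_sum]
  simp only [← rowSum_rowTab hn]
  unfold partitionZ BoundaryCond stateWeight
  rw [Finset.sum_filter, Fintype.sum_prod_type]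
  refine Finset.sum_congr rfl fun f _ => ?_
  by_cases hf : f 0 = top ∧ f (Fin.last m) = bottom
  · rw [if_pos hf]
    simp only [hf.1, hf.2, true_and]
    unfold rowSum
    rw [Finset.prod_univ_sum, ← Finset.sum_filter]
    refine Finset.sum_congr ?_ fun _ _ => rfl
    ext g
    simp [Fintype.mem_piFinset]
  · rw [if_neg hf]
    refine Finset.sum_eq_zero fun g _ => ?_
    rw [if_neg]
    rintro ⟨h1, h2, _⟩; exact hf ⟨h1, h2⟩
end
end SuperLLT

/-! ### Bead configurations of partitions, and ribbons by diagonals -/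

namespace SuperLLT

/-- The bead (Maya) configuration of a partition with at most `N` parts. -/
def beads (N : ℕ) (lam : YoungDiagram) : Finset ℕ :=
  (range N).image fun t => lam.rowLen t + (N - 1 - t)

/-- The number of beads in columns `≥ k`. -/
def Dc (B : Finset ℕ) (k : ℕ) : ℕ := #(B.filter (k ≤ ·))

/-- The index of the diagonal of a cell. -/
def dg (N : ℕ) (c : ℕ × ℕ) : ℕ := N + c.2 - c.1

/-- All cells lie in the first `N` rows. -/
def RowsLt (N : ℕ) (s : Finset (ℕ × ℕ)) : Prop := ∀ c ∈ s, c.1 < N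

lemma beads_injOn (N : ℕ) (lam : YoungDiagram) :
    Set.InjOn (fun t => lam.rowLen t + (N - 1 - t)) (range N : Finset ℕ) := by
  intro a ha b hb h
  simp only [coe_range, Set.mem_Iio] at ha hb h
  rcases lt_trichotomy a b with hab | hab | hab
  · have := lam.rowLen_anti a b hab.le; omega
  · exact hab
  · have := lam.rowLen_anti b a hab.le; omega

lemma card_beads (N : ℕ) (lam : YoungDiagram) : #(beads N lam) = N := by
  rw [beads, card_image_of_injOn (beads_injOn N lam), card_range]

lemma Dc_succ (B : Finset ℕ) (k : ℕ) : Dc B k = Dc B (k + 1) + if k ∈ B then 1 else 0 := by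
  unfold Dc
  split_ifs with h
  · rw [← card_insert_of_notMem (a := k) (by simp)]
    congr 1; ext b; simp only [mem_filter, mem_insert]
    constructor
    · rintro ⟨h1, h2⟩
      by_cases hb : b = k
      · exact Or.inl hb
      · exact Or.inr ⟨h1, by omega⟩
    · rintro (rfl | ⟨h1, h2⟩)
      · exact ⟨h, le_rfl⟩
      · exact ⟨h1, by omega⟩
  · rw [add_zero]
    congr 1; ext b; simp only [mem_filter]
    constructor
    · rintro ⟨h1, h2⟩
      refine ⟨h1, ?_⟩
      have : b ≠ k := by rintro rfl; exact h h1
      omega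
    · rintro ⟨h1, h2⟩; exact ⟨h1, by omega⟩

lemma Dc_anti (B : Finset ℕ) {k l : ℕ} (h : k ≤ l) : Dc B l ≤ Dc B k :=
  card_le_card (monotone_filter_right _ fun _ _ hb => h.trans hb)

lemma Dc_zero (B : Finset ℕ) : Dc B 0 = #B := by simp [Dc]

lemma Dc_le_add (B : Finset ℕ) (k m : ℕ) : Dc B k ≤ Dc B (k + m) + m := by
  induction m with
  | zero => simp
  | succ m ih =>
    have := Dc_succ B (k + m)
    have e : k + (m + 1) = k + m + 1 := by omega
    rw [e]
    split_ifs at this <;> omega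

lemma card_le_Dc_add (B : Finset ℕ) (k : ℕ) : #B ≤ Dc B k + k := by
  have := Dc_le_add B 0 k
  rwa [Dc_zero, zero_add] at this

lemma mem_iff_Dc {B : Finset ℕ} {k : ℕ} : k ∈ B ↔ Dc B k = Dc B (k + 1) + 1 := by
  have := Dc_succ B k
  split_ifs at this with h
  · simp [h, this]
  · simp [h, this]

lemma Dc_sub (B : Finset ℕ) {k l : ℕ} (h : k ≤ l) :
    Dc B k = Dc B l + #(B.filter fun b => k ≤ b ∧ b < l) := by
  unfold Dc
  rw [← card_union_of_disjoint]
  · congr 1; ext b; simp only [mem_filter, mem_union]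
    constructor
    · rintro ⟨h1, h2⟩
      by_cases hb : l ≤ b
      · exact Or.inl ⟨h1, hb⟩
      · exact Or.inr ⟨h1, h2, by omega⟩
    · rintro (⟨h1, h2⟩ | ⟨h1, h2, _⟩)
      · exact ⟨h1, by omega⟩
      · exact ⟨h1, h2⟩
  · rw [disjoint_filter]; intro b _ h1 h2; omega

/-- On the diagonal `k`, the cells of a partition are those in the rows above the number of beads in
columns `≥ k`. -/
lemma mem_iff_lt_Dc {N : ℕ} {lam : YoungDiagram} (h : RowsLt N lam.cells) (c : ℕ × ℕ) :
    c ∈ lam.cells ↔ c.1 < Dc (beads N lam) (dg N c) := by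
  obtain ⟨i, j⟩ := c
  have hD : Dc (beads N lam) (dg N (i, j)) =
      #((range N).filter fun t => N + j ≤ lam.rowLen t + (N - 1 - t) + i) := by
    unfold Dc beads dg
    rw [filter_image, card_image_of_injOn]
    · congr 1; ext t; simp only [mem_filter]
      refine and_congr_right fun _ => ?_
      omega
    · exact (beads_injOn N lam).mono (coe_subset.2 (filter_subset _ _))
  rw [hD, YoungDiagram.mem_cells, YoungDiagram.mem_iff_lt_rowLen]
  simp only
  constructor
  · intro hj
    have hi : i < N := h (i, j) ((YoungDiagram.mem_cells _).2 (YoungDiagram.mem_iff_lt_rowLen.2 hj))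
    have : range (i + 1) ⊆ (range N).filter
        fun t => N + j ≤ lam.rowLen t + (N - 1 - t) + i := by
      intro t ht
      rw [mem_range] at ht
      have := lam.rowLen_anti t i (by omega)
      rw [mem_filter, mem_range]; omega
    have := card_le_card this
    rw [card_range] at this; omega
  · intro hlt
    by_contra hj
    have : (range N).filter (fun t => N + j ≤ lam.rowLen t + (N - 1 - t) + i) ⊆ range i := by
      intro t ht
      rw [mem_filter, mem_range] at ht
      rw [mem_range]
      by_contra hti
      have := lam.rowLen_anti i t (by omega)
      omega
    have := card_le_card this
    rw [card_range] at this; omega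

/-- Recovering the counting function from the cells on a diagonal. -/
lemma eq_of_same_cells {N : ℕ} {B B' : Finset ℕ} (hB : #B = N) (hB' : #B' = N)
    (h : ∀ c : ℕ × ℕ, c.1 < Dc B (dg N c) ↔ c.1 < Dc B' (dg N c)) : B = B' := by
  have hD : ∀ k, Dc B k = Dc B' k := by
    intro k
    have h1 := card_le_Dc_add B k
    have h2 := card_le_Dc_add B' k
    have e : ∀ i, N ≤ i + k → dg N (i, i + k - N) = k := by
      intro i hi; simp only [dg]; omega
    have h3 := h (Dc B k, Dc B k + k - N)
    have h4 := h (Dc B' k, Dc B' k + k - N)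
    rw [e _ (by omega)] at h3 h4
    simp only at h3 h4; omega
  ext k
  rw [mem_iff_Dc, mem_iff_Dc, hD, hD]

/-- The partition with a given bead configuration. -/
def ofBeads (N : ℕ) (B : Finset ℕ) (hB : #B = N) : YoungDiagram where
  cells := ((range N) ×ˢ (range (B.sup id + N + 1))).filter fun c => c.1 < Dc B (dg N c)
  isLowerSet := by
    rintro ⟨i, j⟩ ⟨i', j'⟩ hle hc
    simp only [Prod.mk_le_mk] at hle
    simp only [coe_filter, mem_product, mem_range, Set.mem_ofPred_eq] at hc ⊢
    refine ⟨by omega, ?_⟩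
    have h1 := Dc_le_add B (dg N (i, j)) (i - i')
    have h2 : dg N (i', j') ≤ dg N (i, j) + (i - i') := by simp only [dg]; omega
    have h3 := Dc_anti B h2
    omega

lemma mem_ofBeads {N : ℕ} {B : Finset ℕ} (hB : #B = N) (c : ℕ × ℕ) :
    c ∈ (ofBeads N B hB).cells ↔ c.1 < Dc B (dg N c) := by
  simp only [ofBeads, mem_filter, mem_product, mem_range, and_iff_right_iff_imp]
  intro h
  have h1 : Dc B (dg N c) ≤ N := hB ▸ card_le_card (filter_subset _ _)
  refine ⟨by omega, ?_⟩
  have h2 : 0 < Dc B (dg N c) := by omega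
  obtain ⟨b, hb⟩ := card_pos.1 h2
  rw [mem_filter] at hb
  have : b ≤ B.sup id := Finset.le_sup (f := id) hb.1
  simp only [dg] at hb; omega

lemma rowsLt_ofBeads {N : ℕ} {B : Finset ℕ} (hB : #B = N) : RowsLt N (ofBeads N B hB).cells := by
  intro c hc
  simp only [ofBeads, mem_filter, mem_product, mem_range] at hc
  exact hc.1.1

lemma beads_ofBeads {N : ℕ} {B : Finset ℕ} (hB : #B = N) : beads N (ofBeads N B hB) = B :=
  eq_of_same_cells (card_beads _ _) hB fun c => by
    rw [← mem_iff_lt_Dc (rowsLt_ofBeads hB), mem_ofBeads]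

lemma beads_injective {N : ℕ} {lam μ : YoungDiagram} (h1 : RowsLt N lam.cells)
    (h2 : RowsLt N μ.cells) (h : beads N lam = beads N μ) : lam = μ := by
  apply YoungDiagram.ext
  ext c
  rw [mem_iff_lt_Dc h1, mem_iff_lt_Dc h2, h]

/-- A set of cells meeting exactly the diagonals `p+1, …, p+n`, once each, with cells on
consecutive diagonals adjacent. -/
structure RibAt (N n p : ℕ) (ρ : Finset (ℕ × ℕ)) : Prop where
  rows : RowsLt N ρ
  range : ∀ c ∈ ρ, p < dg N c ∧ dg N c ≤ p + n
  ex : ∀ k, p < k → k ≤ p + n → ∃ c ∈ ρ, dg N c = k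
  uniq : ∀ c ∈ ρ, ∀ d ∈ ρ, dg N c = dg N d → c = d
  step : ∀ c ∈ ρ, ∀ d ∈ ρ, dg N d = dg N c + 1 →
    d = (c.1, c.2 + 1) ∨ (c.1 = d.1 + 1 ∧ c.2 = d.2)

lemma skew_convex {s : Finset (ℕ × ℕ)} (h : IsSkewCells s) {a b c : ℕ × ℕ} (ha : a ∈ s)
    (hc : c ∈ s) (hab : a ≤ b) (hbc : b ≤ c) : b ∈ s := by
  obtain ⟨μ, lam, _, rfl⟩ := h
  rw [mem_sdiff] at *
  exact ⟨lam.isLowerSet hbc hc.1, fun hb => ha.2 (μ.isLowerSet hab hb)⟩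

lemma dg_adj {N : ℕ} {c d : ℕ × ℕ} (hc : c.1 < N) (hd : d.1 < N) (h : Adj c d) :
    dg N d = dg N c + 1 ∨ dg N c = dg N d + 1 := by
  unfold Adj at h; simp only [dg]; omega

/-- A path of cells has an edge from each intermediate diagonal to the next. -/
lemma crossing {N : ℕ} {s : Finset (ℕ × ℕ)} (hs : RowsLt N s) {c d : ℕ × ℕ}
    (h : Relation.ReflTransGen (fun a b => a ∈ s ∧ b ∈ s ∧ Adj a b) c d) (k : ℕ)
    (h1 : dg N c ≤ k) (h2 : k < dg N d) :
    ∃ a ∈ s, ∃ b ∈ s, Adj a b ∧ dg N a = k ∧ dg N b = k + 1 := by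
  induction h with
  | refl => omega
  | @tail x y _ hxy ih =>
    by_cases hx : k < dg N x
    · exact ih hx
    · have := dg_adj (hs _ hxy.1) (hs _ hxy.2.1) hxy.2.2
      exact ⟨x, hxy.1, y, hxy.2.1, hxy.2.2, by omega, by omega⟩

lemma ribAt_of_isRibbon {N n : ℕ} (hn : 1 ≤ n) {ρ : Finset (ℕ × ℕ)} (h : IsRibbon n ρ)
    (hN : RowsLt N ρ) : ∃ p, RibAt N n p ρ := by
  obtain ⟨hcard, hskew, hconn, h22⟩ := h
  have uniq' : ∀ c ∈ ρ, ∀ d ∈ ρ, dg N c = dg N d → c.1 < d.1 → False := by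
    intro c hc d hd he hlt
    have hr1 := hN c hc; have hr2 := hN d hd
    simp only [dg] at he
    refine h22 c.1 c.2 ⟨hc, ?_, ?_, ?_⟩ <;>
    · refine skew_convex hskew hc hd ?_ ?_ <;> rw [Prod.le_def] <;> simp only <;> omega
  have uniq : ∀ c ∈ ρ, ∀ d ∈ ρ, dg N c = dg N d → c = d := by
    intro c hc d hd he
    have h1 : ¬ c.1 < d.1 := uniq' c hc d hd he
    have h2 : ¬ d.1 < c.1 := uniq' d hd c hc he.symm
    have hr1 := hN c hc; have hr2 := hN d hd
    simp only [dg] at he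
    ext <;> omega
  have hK : #(ρ.image (dg N)) = n := by
    rw [card_image_of_injOn, hcard]
    intro c hc d hd he; exact uniq c hc d hd he
  have hne : (ρ.image (dg N)).Nonempty := card_pos.1 (by omega)
  set lo := (ρ.image (dg N)).min' hne with hlo
  set hi := (ρ.image (dg N)).max' hne with hhi
  have hloK := (ρ.image (dg N)).min'_mem hne
  have hhiK := (ρ.image (dg N)).max'_mem hne
  rw [← hlo] at hloK; rw [← hhi] at hhiK
  have hKeq : ρ.image (dg N) = Icc lo hi := by
    ext k
    rw [mem_Icc]
    constructor
    · intro hk; exact ⟨min'_le _ _ hk, le_max' _ _ hk⟩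
    · rintro ⟨h1, h2⟩
      by_cases hk : k = hi
      · rw [hk]; exact hhiK
      obtain ⟨c, hc, hce⟩ := mem_image.1 hloK
      obtain ⟨d, hd, hde⟩ := mem_image.1 hhiK
      obtain ⟨a, ha, b, hb, _, h3, _⟩ := crossing hN (hconn c hc d hd) k (by omega) (by omega)
      exact mem_image.2 ⟨a, ha, h3⟩
  have hlen : hi + 1 - lo = n := by rw [hKeq, Nat.card_Icc] at hK; exact hK
  have hlo1 : 1 ≤ lo := by
    obtain ⟨c, hc, hce⟩ := mem_image.1 hloK
    have := hN c hc
    simp only [dg] at hce; omega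
  refine ⟨lo - 1, hN, ?_, ?_, uniq, ?_⟩
  · intro c hc
    have : dg N c ∈ Icc lo hi := hKeq ▸ mem_image_of_mem _ hc
    rw [mem_Icc] at this; omega
  · intro k h1 h2
    have : k ∈ ρ.image (dg N) := by rw [hKeq, mem_Icc]; omega
    exact mem_image.1 this
  · intro c hc d hd he
    obtain ⟨a, ha, b, hb, hadj, h3, h4⟩ := crossing hN (hconn c hc d hd) (dg N c) le_rfl (by omega)
    have hac := uniq a ha c hc h3
    have hbd := uniq b hb d hd (by omega)
    subst hac hbd
    have hr1 := hN _ ha; have hr2 := hN _ hb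
    unfold Adj at hadj
    simp only [dg] at he
    rcases hadj with h | h
    · left; ext <;> simp only <;> omega
    · right; omega

namespace RibAt
variable {N n p : ℕ} {ρ : Finset (ℕ × ℕ)}

lemma unique_pos (hn : 1 ≤ n) {p' : ℕ} (h : RibAt N n p ρ) (h' : RibAt N n p' ρ) : p = p' := by
  obtain ⟨c, hc, he⟩ := h.ex (p + 1) (by omega) (by omega)
  obtain ⟨d, hd, he'⟩ := h'.ex (p' + 1) (by omega) (by omega)
  have := h'.range c hc
  have := h.range d hd
  omega

lemma mono (h : RibAt N n p ρ) {c d : ℕ × ℕ} (hc : c ∈ ρ) (hd : d ∈ ρ)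
    (hcd : dg N c ≤ dg N d) : d.1 ≤ c.1 ∧ c.2 ≤ d.2 := by
  obtain ⟨m, hm⟩ := Nat.exists_eq_add_of_le hcd
  induction m generalizing d with
  | zero => rw [h.uniq c hc d hd (by omega)]; exact ⟨le_rfl, le_rfl⟩
  | succ m ih =>
    have h1 := h.range d hd
    have h2 := h.range c hc
    obtain ⟨e, he, hee⟩ := h.ex (dg N c + m) (by omega) (by omega)
    have h3 := ih he (by omega) hee
    rcases h.step e he d hd (by omega) with h4 | h4
    · rw [h4]; simp only; omega
    · omega

lemma topRight_mem (hn : 1 ≤ n) (h : RibAt N n p ρ) : topRight ρ ∈ ρ ∧ dg N (topRight ρ) = p + n := by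
  obtain ⟨c, hc, he⟩ := h.ex (p + n) (by omega) le_rfl
  suffices topRight ρ = c by rw [this]; exact ⟨hc, he⟩
  have hm : ∀ d ∈ ρ, c.1 ≤ d.1 ∧ d.2 ≤ c.2 := fun d hd =>
    h.mono hd hc (by rw [he]; exact (h.range d hd).2)
  have h1 : (ρ.image Prod.fst).min = ((c.1 : ℕ) : WithTop ℕ) := by
    refine le_antisymm (Finset.min_le (mem_image_of_mem _ hc)) (Finset.le_min fun a ha => ?_)
    obtain ⟨d, hd, rfl⟩ := mem_image.1 ha
    exact WithTop.coe_le_coe.2 (hm d hd).1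
  have h1' : Option.getD (ρ.image Prod.fst).min 0 = c.1 := by rw [h1]; rfl
  have h2 : ((ρ.filter fun d => d.1 = c.1).image Prod.snd).max = ((c.2 : ℕ) : WithBot ℕ) := by
    refine le_antisymm (Finset.max_le fun a ha => ?_)
      (Finset.le_max (mem_image_of_mem _ (mem_filter.2 ⟨hc, rfl⟩)))
    obtain ⟨d, hd, rfl⟩ := mem_image.1 ha
    exact WithBot.coe_le_coe.2 (hm d (mem_filter.1 hd).1).2
  unfold topRight
  rw [h1', h2]; rfl

lemma bottomLeft_mem (hn : 1 ≤ n) (h : RibAt N n p ρ) :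
    bottomLeft ρ ∈ ρ ∧ dg N (bottomLeft ρ) = p + 1 := by
  obtain ⟨c, hc, he⟩ := h.ex (p + 1) (by omega) (by omega)
  suffices bottomLeft ρ = c by rw [this]; exact ⟨hc, he⟩
  have hm : ∀ d ∈ ρ, d.1 ≤ c.1 ∧ c.2 ≤ d.2 := fun d hd =>
    h.mono hc hd (by rw [he]; exact (h.range d hd).1)
  have h1 : (ρ.image Prod.fst).max = ((c.1 : ℕ) : WithBot ℕ) := by
    refine le_antisymm (Finset.max_le fun a ha => ?_) (Finset.le_max (mem_image_of_mem _ hc))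
    obtain ⟨d, hd, rfl⟩ := mem_image.1 ha
    exact WithBot.coe_le_coe.2 (hm d hd).1
  have h1' : Option.getD (ρ.image Prod.fst).max 0 = c.1 := by rw [h1]; rfl
  have h2 : ((ρ.filter fun d => d.1 = c.1).image Prod.snd).min = ((c.2 : ℕ) : WithTop ℕ) := by
    refine le_antisymm (Finset.min_le (mem_image_of_mem _ (mem_filter.2 ⟨hc, rfl⟩)))
      (Finset.le_min fun a ha => ?_)
    obtain ⟨d, hd, rfl⟩ := mem_image.1 ha
    exact WithTop.coe_le_coe.2 (hm d (mem_filter.1 hd).1).2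
  unfold bottomLeft
  rw [h1', h2]; rfl

lemma isRibbon (h : RibAt N n p ρ) (hs : IsSkewCells ρ) : IsRibbon n ρ := by
  refine ⟨?_, hs, ?_, ?_⟩
  · have : #ρ = #(Ioc p (p + n)) := by
      refine Finset.card_bij (fun c _ => dg N c) (fun c hc => mem_Ioc.2 (h.range c hc))
        (fun c hc d hd he => h.uniq c hc d hd he) (fun k hk => ?_)
      rw [mem_Ioc] at hk
      obtain ⟨c, hc, he⟩ := h.ex k hk.1 hk.2
      exact ⟨c, hc, he⟩
    rw [this, Nat.card_Ioc]; omega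
  · have sym : ∀ a b, (a ∈ ρ ∧ b ∈ ρ ∧ Adj a b) → (b ∈ ρ ∧ a ∈ ρ ∧ Adj b a) := by
      rintro a b ⟨ha, hb, hab⟩
      refine ⟨hb, ha, ?_⟩
      unfold Adj at *; omega
    have key : ∀ m, ∀ c ∈ ρ, ∀ d ∈ ρ, dg N d = dg N c + m →
        Relation.ReflTransGen (fun a b => a ∈ ρ ∧ b ∈ ρ ∧ Adj a b) c d := by
      intro m
      induction m with
      | zero =>
        intro c hc d hd he
        rw [h.uniq c hc d hd (by omega)]
      | succ m ih =>
        intro c hc d hd he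
        have h1 := h.range d hd
        have h2 := h.range c hc
        obtain ⟨e, he', hee⟩ := h.ex (dg N c + m) (by omega) (by omega)
        refine (ih c hc e he' hee).tail ⟨he', hd, ?_⟩
        unfold Adj
        rcases h.step e he' d hd (by omega) with h4 | h4
        · left; rw [h4]; simp
        · right; omega
    intro c hc d hd
    rcases le_total (dg N c) (dg N d) with hle | hle
    · exact key (dg N d - dg N c) c hc d hd (by omega)
    · have := key (dg N c - dg N d) d hd c hc (by omega)
      exact Relation.ReflTransGen.mono (fun a b hab => sym b a hab) _ _ this.swap
  · rintro i j ⟨h1, _, _, h4⟩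
    have hr := h.rows _ h4
    have := h.uniq _ h1 _ h4 (by simp only [dg]; omega)
    simp at this
end RibAt
end SuperLLT

/-! ### Adding a ribbon moves a bead -/

namespace SuperLLT

lemma Dc_move {B : Finset ℕ} {p n : ℕ} (hp : p ∈ B) (hpn : p + n ∉ B) (k : ℕ) :
    Dc (insert (p + n) (B.erase p)) k = Dc B k + if p < k ∧ k ≤ p + n then 1 else 0 := by
  unfold Dc
  rw [card_filter, card_filter, sum_insert (fun h => hpn (mem_of_mem_erase h)),
    ← add_sum_erase B _ hp]
  split_ifs <;> omega

/-- Adding a ribbon raises the diagonal lengths by one on the diagonals the ribbon meets. -/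
lemma RibAt.Dc_eq {N n p : ℕ} {ν lam : YoungDiagram} (hle : ν ≤ lam) (hN : RowsLt N lam.cells)
    (h : RibAt N n p (lam.cells \ ν.cells)) (k : ℕ) :
    Dc (beads N lam) k = Dc (beads N ν) k + if p < k ∧ k ≤ p + n then 1 else 0 := by
  have hNν : RowsLt N ν.cells := fun c hc => hN c (hle hc)
  have h1 := card_le_Dc_add (beads N lam) k
  have h2 := card_le_Dc_add (beads N ν) k
  rw [card_beads] at h1 h2
  set a := Dc (beads N ν) k with ha
  set b := Dc (beads N lam) k with hb
  have e : ∀ i, N ≤ i + k → dg N (i, i + k - N) = k := by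
    intro i hi; simp only [dg]; omega
  have mν : ∀ i, N ≤ i + k → ((i, i + k - N) ∈ ν.cells ↔ i < a) := fun i hi => by
    rw [mem_iff_lt_Dc hNν, e i hi]
  have ml : ∀ i, N ≤ i + k → ((i, i + k - N) ∈ lam.cells ↔ i < b) := fun i hi => by
    rw [mem_iff_lt_Dc hN, e i hi]
  have hab : a ≤ b := by
    by_contra hlt
    have := hle ((mν b (by omega)).2 (by omega))
    have := (ml b (by omega)).1 this
    omega
  have mem : ∀ i, a ≤ i → i < b → (i, i + k - N) ∈ lam.cells \ ν.cells := by
    intro i h3 h4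
    rw [mem_sdiff, mν i (by omega), ml i (by omega)]; omega
  split_ifs with hk
  · obtain ⟨c, hc, hck⟩ := h.ex k hk.1 hk.2
    rw [mem_sdiff, mem_iff_lt_Dc hN, mem_iff_lt_Dc hNν, hck] at hc
    have hb2 : ¬ a + 2 ≤ b := by
      intro h3
      have := h.uniq _ (mem a le_rfl (by omega)) _ (mem (a + 1) (by omega) (by omega))
        (by rw [e _ (by omega), e _ (by omega)])
      simp at this
    omega
  · by_contra hne
    have := h.range _ (mem a le_rfl (by omega))
    rw [e _ (by omega)] at this
    exact hk this

lemma exists_Dc_eq (B : Finset ℕ) {k l : ℕ} (hkl : k ≤ l) {v : ℕ} (h1 : Dc B l ≤ v)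
    (h2 : v ≤ Dc B k) : ∃ m, k ≤ m ∧ m ≤ l ∧ Dc B m = v := by
  induction l, hkl using Nat.le_induction with
  | base => exact ⟨k, le_rfl, le_rfl, by omega⟩
  | succ l hl ih =>
    by_cases h : Dc B l ≤ v
    · obtain ⟨m, h3, h4, h5⟩ := ih h
      exact ⟨m, h3, by omega, h5⟩
    · have := Dc_succ B l
      refine ⟨l + 1, by omega, le_rfl, ?_⟩
      split_ifs at this <;> omega

/-- Adding an `n`-ribbon moves one bead `n` places to the right, jumping over as many beads as
the spin of the ribbon. -/
lemma RibAt.beads_eq {N n p : ℕ} (hn : 1 ≤ n) {ν lam : YoungDiagram} (hle : ν ≤ lam)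
    (hN : RowsLt N lam.cells) (h : RibAt N n p (lam.cells \ ν.cells)) :
    p ∈ beads N ν ∧ p + n ∉ beads N ν ∧ beads N lam = insert (p + n) ((beads N ν).erase p) ∧
      spin (lam.cells \ ν.cells) = #((beads N ν).filter fun b => p < b ∧ b < p + n) := by
  have hD := h.Dc_eq hle hN
  have hNν : RowsLt N ν.cells := fun c hc => hN c (hle hc)
  have hp : p ∈ beads N ν := by
    rw [mem_iff_Dc]
    have h1 := hD p
    have h2 := hD (p + 1)
    have h3 := Dc_succ (beads N ν) p
    have h4 := Dc_anti (beads N lam) (Nat.le_succ p)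
    rw [if_neg (by omega)] at h1
    rw [if_pos (by omega)] at h2
    simp only [Nat.succ_eq_add_one] at h4
    split_ifs at h3 <;> omega
  have hpn : p + n ∉ beads N ν := by
    rw [mem_iff_Dc]
    have h1 := hD (p + n)
    have h2 := hD (p + n + 1)
    have h3 := Dc_succ (beads N lam) (p + n)
    rw [if_pos (by omega)] at h1
    rw [if_neg (by omega)] at h2
    split_ifs at h3 <;> omega
  refine ⟨hp, hpn, ?_, ?_⟩
  · ext k
    rw [mem_iff_Dc, mem_iff_Dc, Dc_move hp hpn, Dc_move hp hpn, hD, hD]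
  · have himg : (lam.cells \ ν.cells).image Prod.fst =
        Icc (Dc (beads N ν) (p + n)) (Dc (beads N ν) (p + 1)) := by
      ext v
      rw [mem_image, mem_Icc]
      constructor
      · rintro ⟨c, hc, rfl⟩
        have hr := h.range c hc
        have h1 := hD (dg N c)
        rw [if_pos hr] at h1
        rw [mem_sdiff, mem_iff_lt_Dc hN, mem_iff_lt_Dc hNν] at hc
        have h2 := Dc_anti (beads N ν) hr.2
        have h3 := Dc_anti (beads N ν) (Nat.succ_le_of_lt hr.1)
        simp only [Nat.succ_eq_add_one] at h3
        omega
      · rintro ⟨h1, h2⟩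
        obtain ⟨k, h3, h4, h5⟩ := exists_Dc_eq (beads N ν) (by omega) h1 h2
        obtain ⟨c, hc, hck⟩ := h.ex k (by omega) h4
        refine ⟨c, hc, ?_⟩
        have h6 := hD k
        rw [if_pos (by omega)] at h6
        rw [mem_sdiff, mem_iff_lt_Dc hN, mem_iff_lt_Dc hNν, hck] at hc
        omega
    have h1 := Dc_sub (beads N ν) (show p + 1 ≤ p + n by omega)
    unfold spin
    rw [himg, Nat.card_Icc]
    simp only [Nat.succ_le_iff] at h1 ⊢
    omega

/-- Conversely, undoing a bead move removes a ribbon. -/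
lemma exists_ribAt {N n p : ℕ} {lam : YoungDiagram} (hN : RowsLt N lam.cells)
    {B : Finset ℕ} (hp : p ∈ B) (hpn : p + n ∉ B)
    (hB : beads N lam = insert (p + n) (B.erase p)) :
    ∃ ν : YoungDiagram, ν ≤ lam ∧ beads N ν = B ∧ RibAt N n p (lam.cells \ ν.cells) := by
  have hcard : #B = N := by
    have h1 := card_beads N lam
    rw [hB, card_insert_of_notMem (fun h => hpn (mem_of_mem_erase h)), card_erase_of_mem hp] at h1
    have := card_pos.2 ⟨p, hp⟩
    omega
  have hD : ∀ k, Dc (beads N lam) k = Dc B k + if p < k ∧ k ≤ p + n then 1 else 0 := fun k => by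
    rw [hB, Dc_move hp hpn]
  have hle : ofBeads N B hcard ≤ lam := by
    intro c hc
    have hc' := (mem_ofBeads hcard c).1 hc
    rw [← YoungDiagram.mem_cells, mem_iff_lt_Dc hN, hD]; omega
  have hmem : ∀ c, c ∈ lam.cells \ (ofBeads N B hcard).cells ↔
      (p < dg N c ∧ dg N c ≤ p + n) ∧ c.1 = Dc B (dg N c) := by
    intro c
    rw [mem_sdiff, mem_ofBeads, mem_iff_lt_Dc hN, hD]
    split_ifs with h
    · simp only [h, and_self, true_and]; omega
    · simp only [h, false_and, iff_false]; omega
  have hrow : RowsLt N (lam.cells \ (ofBeads N B hcard).cells) :=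
    fun c hc => hN c (mem_sdiff.1 hc).1
  refine ⟨ofBeads N B hcard, hle, beads_ofBeads hcard, hrow, ?_, ?_, ?_, ?_⟩
  · intro c hc; exact ((hmem c).1 hc).1
  · intro k h1 h2
    have h3 := card_le_Dc_add B k
    have e : dg N (Dc B k, Dc B k + k - N) = k := by simp only [dg]; omega
    exact ⟨(Dc B k, Dc B k + k - N), (hmem _).2 (by rw [e]; exact ⟨⟨h1, h2⟩, rfl⟩), e⟩
  · intro c hc d hd he
    have h1 := ((hmem c).1 hc).2
    have h2 := ((hmem d).1 hd).2
    have hr1 := hrow c hc; have hr2 := hrow d hd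
    rw [he] at h1
    simp only [dg] at he
    ext <;> omega
  · intro c hc d hd he
    have h1 := ((hmem c).1 hc).2
    have h2 := ((hmem d).1 hd).2
    have h3 := Dc_succ B (dg N c)
    rw [← he] at h3
    have hr1 := hrow c hc; have hr2 := hrow d hd
    simp only [dg] at he
    split_ifs at h3
    · right; omega
    · left; ext <;> simp only <;> omega

lemma beads_subset_range {N C : ℕ} {lam : YoungDiagram} (hC : lam.rowLen 0 + N ≤ C) :
    ∀ b ∈ beads N lam, b < C := by
  intro b hb
  obtain ⟨t, ht, rfl⟩ := mem_image.1 hb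
  rw [mem_range] at ht
  have := lam.rowLen_anti 0 t (Nat.zero_le _)
  omega

lemma supp_diagBoundary {N C : ℕ} {lam : YoungDiagram} (hC : lam.rowLen 0 + N ≤ C) :
    supp (diagBoundary lam N C) = beads N lam := by
  ext k
  rw [mem_supp]
  have hiff : (k + 1 ∈ (range N).image fun t => lam.rowLen t + (N - t)) ↔ k ∈ beads N lam := by
    unfold beads
    simp only [mem_image, mem_range]
    refine exists_congr fun t => and_congr_right fun ht => ?_
    omega
  constructor
  · rintro ⟨h, hk⟩
    simp only [diagBoundary, decide_eq_true_eq] at hk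
    exact hiff.1 hk
  · intro hk
    refine ⟨beads_subset_range hC k hk, ?_⟩
    simp only [diagBoundary, decide_eq_true_eq]
    exact hiff.2 hk

end SuperLLT

/-! ### Chains of ribbons -/

namespace SuperLLT

lemma beads_eq_of_move {N n p : ℕ} {ν lam : YoungDiagram} (hp : p ∈ beads N ν)
    (hpn : p + n ∉ beads N ν) (h : beads N lam = insert (p + n) ((beads N ν).erase p)) :
    beads N ν = insert p ((beads N lam).erase (p + n)) := by
  rw [h, erase_insert (fun h => hpn (mem_of_mem_erase h)), insert_erase hp]

lemma RibAt.inner_unique {N n p : ℕ} (hn : 1 ≤ n) {ν ν' lam : YoungDiagram}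
    (hN : RowsLt N lam.cells) (h1 : ν ≤ lam) (h2 : RibAt N n p (lam.cells \ ν.cells))
    (h1' : ν' ≤ lam) (h2' : RibAt N n p (lam.cells \ ν'.cells)) : ν = ν' := by
  obtain ⟨a1, a2, a3, _⟩ := h2.beads_eq hn h1 hN
  obtain ⟨b1, b2, b3, _⟩ := h2'.beads_eq hn h1' hN
  refine beads_injective (N := N) (fun c hc => hN c (h1 hc)) (fun c hc => hN c (h1' hc)) ?_
  rw [beads_eq_of_move a1 a2 a3, beads_eq_of_move b1 b2 b3]

open scoped Classical in
/-- The labelled ribbon sets obtained by growing `μ` to `lam`, adding for each key `(l, p)` of the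
list (read from its end) at most one ribbon, labelled `l` and with tail on diagonal `p + 1`. -/
noncomputable def chainSet (N n : ℕ) {L : Type*} (μ : YoungDiagram) :
    List (L × ℕ) → YoungDiagram → Finset (Finset (Finset (ℕ × ℕ) × L))
  | [], lam => if μ = lam then {∅} else ∅
  | k :: ks, lam => chainSet N n μ ks lam ∪
      if h : ∃ ν : YoungDiagram, ν ≤ lam ∧ RibAt N n k.2 (lam.cells \ ν.cells) then
        (chainSet N n μ ks h.choose).image (insert (lam.cells \ h.choose.cells, k.1))
      else ∅

open scoped Classical in
lemma mem_chainSet_cons {N n : ℕ} (hn : 1 ≤ n) {L : Type*} {μ lam : YoungDiagram}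
    (hN : RowsLt N lam.cells) (k : L × ℕ) (ks : List (L × ℕ)) (T : Finset (Finset (ℕ × ℕ) × L)) :
    T ∈ chainSet N n μ (k :: ks) lam ↔ T ∈ chainSet N n μ ks lam ∨
      ∃ ν : YoungDiagram, ν ≤ lam ∧ RibAt N n k.2 (lam.cells \ ν.cells) ∧
        ∃ T' ∈ chainSet N n μ ks ν, T = insert (lam.cells \ ν.cells, k.1) T' := by
  rw [chainSet, mem_union]
  refine or_congr_right ?_
  split_ifs with h
  · rw [mem_image]
    constructor
    · rintro ⟨T', h1, rfl⟩
      exact ⟨h.choose, h.choose_spec.1, h.choose_spec.2, T', h1, rfl⟩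
    · rintro ⟨ν, h1, h2, T', h3, rfl⟩
      have := RibAt.inner_unique hn hN h1 h2 h.choose_spec.1 h.choose_spec.2
      rw [← this]
      exact ⟨T', h3, rfl⟩
  · simp only [notMem_empty, false_iff]
    rintro ⟨ν, h1, h2, _⟩
    exact h ⟨ν, h1, h2⟩

lemma exists_key_of_mem_chainSet {N n : ℕ} (hn : 1 ≤ n) {L : Type*} {μ : YoungDiagram}
    (ks : List (L × ℕ)) : ∀ (lam : YoungDiagram), RowsLt N lam.cells →
    ∀ T ∈ chainSet N n μ ks lam, ∀ t ∈ T, ∃ p, RibAt N n p t.1 ∧ (t.2, p) ∈ ks := by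
  classical
  induction ks with
  | nil =>
    intro lam _ T hT t ht
    rw [chainSet] at hT
    split_ifs at hT
    · rw [mem_singleton.1 hT] at ht; simp at ht
    · simp at hT
  | cons k ks ih =>
    intro lam hN T hT t ht
    rw [mem_chainSet_cons hn hN] at hT
    rcases hT with hT | ⟨ν, h1, h2, T', h3, rfl⟩
    · obtain ⟨p, h4, h5⟩ := ih lam hN T hT t ht
      exact ⟨p, h4, List.mem_cons_of_mem _ h5⟩
    · rw [mem_insert] at ht
      rcases ht with rfl | ht
      · exact ⟨k.2, h2, List.mem_cons_self⟩
      · obtain ⟨p, h4, h5⟩ := ih ν (fun c hc => hN c (h1 hc)) T' h3 t ht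
        exact ⟨p, h4, List.mem_cons_of_mem _ h5⟩

/-- The weight of a labelled ribbon set. -/
def tabW {L R : Type*} [CommRing R] (q : R) (z : L → R) (T : Finset (Finset (ℕ × ℕ) × L)) : R :=
  ∏ t ∈ T, q ^ spin t.1 * z t.2

/-- A matrix coefficient of a product of factors `1 + z u_p` enumerates chains of ribbons. -/
lemma sum_chainSet {N n C : ℕ} (hn : 1 ≤ n) {L R : Type*} [CommRing R] (q : R) (z : L → R)
    {μ : YoungDiagram} (hμ : RowsLt N μ.cells) {B : Fin C → Bool} (hB : supp B = beads N μ) (ks : List (L × ℕ))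
    (hks : ks.Nodup) : ∀ (lam : YoungDiagram), RowsLt N lam.cells → ∀ B' : Fin C → Bool,
    supp B' = beads N lam →
    (ks.map fun k => (1 + z k.1 • u n C q k.2 : Mat C R)).prod B' B =
      ∑ T ∈ chainSet N n μ ks lam, tabW q z T := by
  classical
  induction ks with
  | nil =>
    intro lam hN B' hB'
    simp only [List.map_nil, List.prod_nil, chainSet, Matrix.one_apply]
    have : B' = B ↔ μ = lam := by
      constructor
      · rintro rfl; exact beads_injective hμ hN (hB.symm.trans hB')
      · rintro rfl; exact supp_injective (hB'.trans hB.symm)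
    simp only [this]
    split_ifs <;> simp [tabW]
  | cons k ks ih =>
    intro lam hN B' hB'
    rw [List.nodup_cons] at hks
    have ih := ih hks.2
    rw [List.map_cons, List.prod_cons, add_mul, one_mul, Matrix.add_apply, ih lam hN B' hB',
      chainSet]
    have hnot : ∀ ν : YoungDiagram, RowsLt N ν.cells → ∀ T ∈ chainSet N n μ ks ν, ∀ ρ,
        RibAt N n k.2 ρ → (ρ, k.1) ∉ T := by
      intro ν hν T hT ρ hρ hmem
      obtain ⟨p, h1, h2⟩ := exists_key_of_mem_chainSet hn ks ν hν T hT _ hmem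
      have := RibAt.unique_pos hn hρ h1
      subst this
      exact hks.1 h2
    rw [sum_union]
    · congr 1
      rw [Matrix.smul_mul, Matrix.smul_apply, Matrix.mul_apply]
      split_ifs with h
      · obtain ⟨hle, hrib⟩ := h.choose_spec
        set ν := h.choose with hν
        have hNν : RowsLt N ν.cells := fun c hc => hN c (hle hc)
        obtain ⟨a1, a2, a3, a4⟩ := hrib.beads_eq hn hle hN
        have hsub : ∀ b ∈ beads N ν, b < C := by
          intro b hb
          rw [beads_eq_of_move a1 a2 a3, mem_insert] at hb
          have hl : ∀ b ∈ beads N lam, b < C := fun b hb => lt_of_mem_supp (hB' ▸ hb)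
          rcases hb with rfl | hb
          · have := hl (k.2 + n) (by rw [a3]; exact mem_insert_self _ _)
            omega
          · exact hl b (mem_of_mem_erase hb)
        obtain ⟨B'', hB''⟩ : ∃ B'' : Fin C → Bool, supp B'' = beads N ν :=
          exists_supp (fun b hb => mem_range.2 (hsub b hb))
        rw [sum_eq_single B'']
        · rw [ih ν hNν B'' hB'', sum_image]
          · rw [smul_eq_mul, mul_sum, mul_sum]
            refine sum_congr rfl fun T hT => ?_
            rw [tabW, tabW, prod_insert (hnot ν hNν T hT _ hrib)]
            simp only
            rw [a4, u, if_pos (by rw [hB'', hB']; exact ⟨a1, a2, a3⟩), hB'']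
            ring
          · intro T1 h1 T2 h2 heq
            rw [← erase_insert (hnot ν hNν T1 h1 _ hrib), heq,
              erase_insert (hnot ν hNν T2 h2 _ hrib)]
        · intro B3 _ hne
          rw [u, if_neg, zero_mul]
          rintro ⟨b1, b2, b3⟩
          apply hne
          apply supp_injective
          rw [hB'', beads_eq_of_move a1 a2 a3, ← hB', b3,
            erase_insert (fun h => b2 (mem_of_mem_erase h)), insert_erase b1]
        · intro h; exact absurd (mem_univ _) h
      · rw [sum_empty, sum_eq_zero, smul_zero]
        intro B3 _
        rw [u, if_neg, zero_mul]
        rintro ⟨b1, b2, b3⟩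
        obtain ⟨ν, c1, _, c3⟩ := exists_ribAt hN b1 b2 (hB'.symm.trans b3)
        exact h ⟨ν, c1, c3⟩
    · rw [disjoint_left]
      intro T hT hT'
      split_ifs at hT' with h
      · obtain ⟨T', _, rfl⟩ := mem_image.1 hT'
        exact hnot lam hN _ hT _ h.choose_spec.2 (mem_insert_self _ _)
      · simp at hT'

end SuperLLT

/-! ### Tableaux cell by cell, and the order of their ribbons -/

namespace SuperLLT

/-- The conditions defining a super ribbon tableau, stated cell by cell. -/
structure Tab (n : ℕ) {L : Type*} [LinearOrder L] (horiz : L → Prop) (μ lam : YoungDiagram)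
    (T : Finset (Finset (ℕ × ℕ) × L)) : Prop where
  le : μ ≤ lam
  rib : ∀ t ∈ T, IsRibbon n t.1
  disj : ∀ t ∈ T, ∀ t' ∈ T, ∀ c, c ∈ t.1 → c ∈ t'.1 → t = t'
  cover : ∀ c, (∃ t ∈ T, c ∈ t.1) ↔ c ∈ lam.cells ∧ c ∉ μ.cells
  young : ∀ i : L, ∀ x y : ℕ × ℕ, x ≤ y → (y ∈ μ.cells ∨ ∃ t ∈ T, t.2 ≤ i ∧ y ∈ t.1) →
    (x ∈ μ.cells ∨ ∃ t ∈ T, t.2 ≤ i ∧ x ∈ t.1)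
  north : ∀ t ∈ T, horiz t.2 → ∀ t' ∈ T, t'.2 = t.2 → ∀ d ∈ t'.1,
    ¬ (d.1 + 1 = (topRight t.1).1 ∧ d.2 = (topRight t.1).2)
  west : ∀ t ∈ T, ¬ horiz t.2 → ∀ t' ∈ T, t'.2 = t.2 → ∀ d ∈ t'.1,
    ¬ (d.1 = (bottomLeft t.1).1 ∧ d.2 + 1 = (bottomLeft t.1).2)

lemma mem_sup_filter {ι : Type*} {s : Finset ι} {P : ι → Prop} {_ : DecidablePred P}
    {f : ι → Finset (ℕ × ℕ)} {c : ℕ × ℕ} :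
    c ∈ (s.filter P).sup f ↔ ∃ t ∈ s, P t ∧ c ∈ f t := by
  rw [Finset.mem_sup]
  simp only [mem_filter, and_assoc]

lemma isSuperTableau_iff {n : ℕ} {L : Type*} [LinearOrder L] (horiz : L → Prop)
    (μ lam : YoungDiagram) (T : Finset (Finset (ℕ × ℕ) × L)) :
    IsSuperTableau n μ lam (fun a b : L => a ≤ b) horiz T ↔ Tab n horiz μ lam T := by
  classical
  unfold IsSuperTableau TouchesNorth TouchesWest
  constructor
  · rintro ⟨h1, h2, h3, h4, h5, h6⟩
    refine ⟨h1, h2, ?_, ?_, ?_, ?_, ?_⟩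
    · intro t ht t' ht' c hc hc'
      by_contra hne
      exact disjoint_left.1 (h3 t ht t' ht' hne) hc hc'
    · intro c
      rw [← mem_sdiff, ← h4, Finset.mem_sup]
    · intro i x y hxy hy
      obtain ⟨ν, hν⟩ := h5 i
      have key : ∀ c, c ∈ ν.cells ↔ (c ∈ μ.cells ∨ ∃ t ∈ T, t.2 ≤ i ∧ c ∈ t.1) := by
        intro c
        rw [hν, mem_union, mem_sup_filter]
      rw [← key] at hy ⊢
      exact ν.isLowerSet hxy hy
    · intro t ht hh t' ht' he d hd hcon
      rcases (h6 t ht).1 hh with h | h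
      · omega
      · apply h
        rw [mem_sup_filter]
        refine ⟨t', ht', he, ?_⟩
        rw [← hcon.1, ← hcon.2]; exact hd
    · intro t ht hh t' ht' he d hd hcon
      rcases (h6 t ht).2 hh with h | h
      · omega
      · apply h
        rw [mem_sup_filter]
        refine ⟨t', ht', he, ?_⟩
        rw [← hcon.1, ← hcon.2]; exact hd
  · intro h
    refine ⟨h.le, h.rib, ?_, ?_, ?_, ?_⟩
    · intro t ht t' ht' hne
      rw [disjoint_left]
      intro c hc hc'
      exact hne (h.disj t ht t' ht' c hc hc')
    · ext c
      rw [mem_sdiff, ← h.cover, Finset.mem_sup]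
    · intro i
      refine ⟨⟨μ.cells ∪ ((T.filter fun p => p.2 ≤ i).sup fun p => p.1), ?_⟩, by congr!⟩
      intro y x hxy hy
      have key : ∀ c, c ∈ (↑(μ.cells ∪ ((T.filter fun p => p.2 ≤ i).sup fun p => p.1)) :
          Set (ℕ × ℕ)) ↔ (c ∈ μ.cells ∨ ∃ t ∈ T, t.2 ≤ i ∧ c ∈ t.1) := by
        intro c
        rw [mem_coe, mem_union, mem_sup_filter]
      rw [key] at hy ⊢
      exact h.young i x y hxy hy
    · intro t ht
      constructor
      · intro hh
        rw [or_iff_not_imp_left]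
        intro h0 hmem
        rw [mem_sup_filter] at hmem
        obtain ⟨t', ht', he, hd⟩ := hmem
        exact h.north t ht hh t' ht' he _ hd ⟨by simp only; omega, rfl⟩
      · intro hh
        rw [or_iff_not_imp_left]
        intro h0 hmem
        rw [mem_sup_filter] at hmem
        obtain ⟨t', ht', he, hd⟩ := hmem
        exact h.west t ht hh t' ht' he _ hd ⟨rfl, by simp only; omega⟩

/-- The order in which the ribbons of a tableau are added: by label, and inside a horizontal
(vertical) strip from left to right (right to left). -/
def keyLt {L : Type*} [LinearOrder L] (horiz : L → Prop) (k k' : L × ℕ) : Prop :=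
  k.1 < k'.1 ∨ k.1 = k'.1 ∧ ((horiz k.1 ∧ k.2 < k'.2) ∨ (¬ horiz k.1 ∧ k'.2 < k.2))

/-- The relative position of two disjoint ribbons is the same on all diagonals they share. -/
lemma RibAt.persist {N n p p' : ℕ} {ρ ρ' : Finset (ℕ × ℕ)} (h : RibAt N n p ρ)
    (h' : RibAt N n p' ρ') (hd : ∀ c ∈ ρ, c ∉ ρ') {c d : ℕ × ℕ} (hc : c ∈ ρ) (hdm : d ∈ ρ')
    (he : dg N c = dg N d) (hlt : c.1 < d.1) {c' d' : ℕ × ℕ} (hc' : c' ∈ ρ) (hd' : d' ∈ ρ')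
    (he' : dg N c' = dg N d') : c'.1 < d'.1 := by
  have ne : ∀ a ∈ ρ, ∀ b ∈ ρ', dg N a = dg N b → a.1 ≠ b.1 := by
    intro a ha b hb hab h1
    apply hd a ha
    have e : a = b := by
      have r1 := h.rows a ha
      simp only [dg] at hab
      ext <;> omega
    rwa [e]
  have up : ∀ m, ∀ a ∈ ρ, ∀ b ∈ ρ', dg N a = dg N c + m → dg N b = dg N c + m → a.1 < b.1 := by
    intro m
    induction m with
    | zero =>
      intro a ha b hb h1 h2
      rw [h.uniq a ha c hc (by omega), h'.uniq b hb d hdm (by omega)]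
      exact hlt
    | succ m ih =>
      intro a ha b hb h1 h2
      have r1 := h.range a ha; have r2 := h'.range b hb
      have r3 := h.range c hc; have r4 := h'.range d hdm
      obtain ⟨a0, ha0, e1⟩ := h.ex (dg N c + m) (by omega) (by omega)
      obtain ⟨b0, hb0, e2⟩ := h'.ex (dg N c + m) (by omega) (by omega)
      have := ih a0 ha0 b0 hb0 e1 e2
      have hne := ne a ha b hb (by omega)
      have s1 := h.step a0 ha0 a ha (by omega)
      have s2 := h'.step b0 hb0 b hb (by omega)
      simp only [Prod.ext_iff] at s1 s2
      omega
  have down : ∀ m, ∀ a ∈ ρ, ∀ b ∈ ρ', dg N a + m = dg N c → dg N b + m = dg N c → a.1 < b.1 := by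
    intro m
    induction m with
    | zero =>
      intro a ha b hb h1 h2
      rw [h.uniq a ha c hc (by omega), h'.uniq b hb d hdm (by omega)]
      exact hlt
    | succ m ih =>
      intro a ha b hb h1 h2
      have r1 := h.range a ha; have r2 := h'.range b hb
      have r3 := h.range c hc; have r4 := h'.range d hdm
      obtain ⟨a0, ha0, e1⟩ := h.ex (dg N a + 1) (by omega) (by omega)
      obtain ⟨b0, hb0, e2⟩ := h'.ex (dg N a + 1) (by omega) (by omega)
      have := ih a0 ha0 b0 hb0 (by omega) (by omega)
      have hne := ne a ha b hb (by omega)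
      have s1 := h.step a ha a0 ha0 (by omega)
      have s2 := h'.step b hb b0 hb0 (by omega)
      simp only [Prod.ext_iff] at s1 s2
      omega
  rcases le_total (dg N c) (dg N c') with hle | hle
  · exact up (dg N c' - dg N c) c' hc' d' hd' (by omega) (by omega)
  · exact down (dg N c - dg N c') c' hc' d' hd' (by omega) (by omega)

/-- If a cell of one ribbon lies directly above or to the left of a cell of another one, then the
two ribbons share a diagonal, or they meet end to end. -/
lemma RibAt.adjacent {N n p p' : ℕ} {ρ ρ' : Finset (ℕ × ℕ)} (h : RibAt N n p ρ)
    (h' : RibAt N n p' ρ') (hd : ∀ c ∈ ρ, c ∉ ρ') {c b : ℕ × ℕ} (hc : c ∈ ρ) (hb : b ∈ ρ')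
    (hcb : b = (c.1, c.2 + 1) ∨ b = (c.1 + 1, c.2)) :
    (∃ c' ∈ ρ, ∃ d' ∈ ρ', dg N c' = dg N d' ∧ c'.1 < d'.1) ∨
    (b = (c.1 + 1, c.2) ∧ dg N c = p + 1 ∧ dg N b = p' + n) ∨
    (b = (c.1, c.2 + 1) ∧ dg N c = p + n ∧ dg N b = p' + 1) := by
  have r1 := h.range c hc; have r2 := h'.range b hb
  have w1 := h.rows c hc; have w2 := h'.rows b hb
  have n1 : ∀ a ∈ ρ, a ≠ b := fun a ha hab => hd a ha (hab ▸ hb)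
  have n2 : ∀ a ∈ ρ', a ≠ c := fun a ha hab => hd c hc (hab ▸ ha)
  by_cases g1 : p < dg N b ∧ dg N b ≤ p + n
  · left
    obtain ⟨a, ha, hae⟩ := h.ex _ g1.1 g1.2
    refine ⟨a, ha, b, hb, hae, ?_⟩
    have hne := n1 a ha
    have s1 := h.step c hc a ha
    have s2 := h.step a ha c hc
    simp only [Prod.ext_iff, ne_eq, dg] at *
    omega
  by_cases g2 : p' < dg N c ∧ dg N c ≤ p' + n
  · left
    obtain ⟨a, ha, hae⟩ := h'.ex _ g2.1 g2.2
    refine ⟨c, hc, a, ha, hae.symm, ?_⟩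
    have hne := n2 a ha
    have s1 := h'.step b hb a ha
    have s2 := h'.step a ha b hb
    simp only [Prod.ext_iff, ne_eq, dg] at *
    omega
  right
  rcases hcb with rfl | rfl
  · right
    refine ⟨rfl, ?_, ?_⟩ <;> simp only [dg] at * <;> omega
  · left
    refine ⟨rfl, ?_, ?_⟩ <;> simp only [dg] at * <;> omega

namespace Tab
variable {n N : ℕ} {L : Type*} [LinearOrder L] {horiz : L → Prop} {μ lam : YoungDiagram}
  {T : Finset (Finset (ℕ × ℕ) × L)}

lemma label_le (h : Tab n horiz μ lam T) {t t' : Finset (ℕ × ℕ) × L} (ht : t ∈ T) (ht' : t' ∈ T)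
    {c d : ℕ × ℕ} (hc : c ∈ t.1) (hd : d ∈ t'.1) (hcd : c ≤ d) : t.2 ≤ t'.2 := by
  rcases h.young t'.2 c d hcd (Or.inr ⟨t', ht', le_rfl, hd⟩) with h1 | ⟨t2, h1, h2, h3⟩
  · exact absurd h1 ((h.cover c).1 ⟨t, ht, hc⟩).2
  · rwa [h.disj t ht t2 h1 c hc h3]

lemma exists_tile (h : Tab n horiz μ lam T) {t : Finset (ℕ × ℕ) × L} (ht : t ∈ T)
    {c b : ℕ × ℕ} (hc : c ∈ t.1) (hcb : c ≤ b) (hb : b ∈ lam.cells) :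
    ∃ t' ∈ T, b ∈ t'.1 ∧ t.2 ≤ t'.2 := by
  obtain ⟨t', ht', hb'⟩ := (h.cover b).2 ⟨hb, fun hbμ =>
    ((h.cover c).1 ⟨t, ht, hc⟩).2 (μ.isLowerSet hcb hbμ)⟩
  exact ⟨t', ht', hb', h.label_le ht ht' hc hb' hcb⟩

lemma convex (h : Tab n horiz μ lam T) {t t' : Finset (ℕ × ℕ) × L} (ht : t ∈ T) (ht' : t' ∈ T)
    (hl : t'.2 = t.2) {c b d : ℕ × ℕ} (hc : c ∈ t.1) (hd : d ∈ t'.1) (hcb : c ≤ b) (hbd : b ≤ d) :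
    ∃ t2 ∈ T, t2.2 = t.2 ∧ b ∈ t2.1 := by
  obtain ⟨t2, h1, h2, h3⟩ := h.exists_tile ht hc hcb
    (lam.isLowerSet hbd ((h.cover d).1 ⟨t', ht', hd⟩).1)
  exact ⟨t2, h1, le_antisymm (hl ▸ h.label_le h1 ht' h2 hd hbd) h3, h2⟩

/-- Inside a strip, a ribbon lying to the south-east of another one is added later. -/
lemma keyLt_of_diag (hn : 1 ≤ n) (h : Tab n horiz μ lam T) {t t' : Finset (ℕ × ℕ) × L}
    (ht : t ∈ T) (ht' : t' ∈ T) (hl : t'.2 = t.2) {p p' : ℕ} (hp : RibAt N n p t.1)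
    (hp' : RibAt N n p' t'.1) (hne : t ≠ t') {c d : ℕ × ℕ} (hc : c ∈ t.1) (hd : d ∈ t'.1)
    (he : dg N c = dg N d) (hlt : c.1 < d.1) : keyLt horiz (t.2, p) (t'.2, p') := by
  have hdis : ∀ c ∈ t.1, c ∉ t'.1 := fun c hc hc' => hne (h.disj t ht t' ht' c hc hc')
  have r1 := hp.range c hc; have r2 := hp'.range d hd
  by_cases hh : horiz t.2
  · refine Or.inr ⟨hl.symm, Or.inl ⟨hh, ?_⟩⟩
    by_contra hcon
    simp only at hcon
    obtain ⟨m1, m2⟩ := hp'.topRight_mem hn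
    obtain ⟨a, ha, hae⟩ := hp.ex (p' + n) (by omega) (by omega)
    have hl2 := hp.persist hp' hdis hc hd he hlt ha m1 (by omega)
    have w := hp.rows a ha
    have w' := hp'.rows _ m1
    simp only [dg] at hae m2
    obtain ⟨t2, g1, g2, g3⟩ := h.convex (b := ((topRight t'.1).1 - 1, (topRight t'.1).2)) ht ht' hl
      ha m1 (by rw [Prod.le_def]; simp only; omega) (by rw [Prod.le_def]; simp only; omega)
    exact h.north t' ht' (hl ▸ hh) t2 g1 (g2.trans hl.symm) _ g3 ⟨by simp only; omega, rfl⟩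
  · refine Or.inr ⟨hl.symm, Or.inr ⟨hh, ?_⟩⟩
    by_contra hcon
    simp only at hcon
    obtain ⟨m1, m2⟩ := hp'.bottomLeft_mem hn
    obtain ⟨a, ha, hae⟩ := hp.ex (p' + 1) (by omega) (by omega)
    have hl2 := hp.persist hp' hdis hc hd he hlt ha m1 (by omega)
    have w := hp.rows a ha
    have w' := hp'.rows _ m1
    simp only [dg] at hae m2
    obtain ⟨t2, g1, g2, g3⟩ := h.convex (b := ((bottomLeft t'.1).1, (bottomLeft t'.1).2 - 1)) ht ht'
      hl ha m1 (by rw [Prod.le_def]; simp only; omega) (by rw [Prod.le_def]; simp only; omega)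
    exact h.west t' ht' (hl ▸ hh) t2 g1 (g2.trans hl.symm) _ g3 ⟨rfl, by simp only; omega⟩

/-- A ribbon with a cell directly to the right of or below a cell of another ribbon is added
later. -/
lemma keyLt_of_adj (hn : 1 ≤ n) (h : Tab n horiz μ lam T) {t t' : Finset (ℕ × ℕ) × L}
    (ht : t ∈ T) (ht' : t' ∈ T) {p p' : ℕ} (hp : RibAt N n p t.1)
    (hp' : RibAt N n p' t'.1) (hne : t ≠ t') {c b : ℕ × ℕ} (hc : c ∈ t.1) (hb : b ∈ t'.1)
    (hcb : b = (c.1, c.2 + 1) ∨ b = (c.1 + 1, c.2)) : keyLt horiz (t.2, p) (t'.2, p') := by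
  have hdis : ∀ c ∈ t.1, c ∉ t'.1 := fun c hc hc' => hne (h.disj t ht t' ht' c hc hc')
  have hle : c ≤ b := by
    rw [Prod.le_def]; rcases hcb with rfl | rfl <;> simp
  rcases (h.label_le ht ht' hc hb hle).lt_or_eq with hlt | hl
  · exact Or.inl hlt
  rcases hp.adjacent hp' hdis hc hb hcb with ⟨c', g1, d', g2, g3, g4⟩ | ⟨g1, g2, g3⟩ | ⟨g1, g2, g3⟩
  · exact h.keyLt_of_diag hn ht ht' hl.symm hp hp' hne g1 g2 g3 g4
  · have w := hp.rows c hc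
    by_cases hh : horiz t.2
    · obtain ⟨m1, m2⟩ := hp'.topRight_mem hn
      have : topRight t'.1 = b := hp'.uniq _ m1 _ hb (by omega)
      exact absurd ⟨by rw [this, g1], by rw [this, g1]⟩ (h.north t' ht' (hl ▸ hh) t ht hl c hc)
    · refine Or.inr ⟨hl, Or.inr ⟨hh, ?_⟩⟩
      rw [g1] at g3
      simp only [dg] at g2 g3 ⊢
      omega
  · have w := hp.rows c hc
    by_cases hh : horiz t.2
    · refine Or.inr ⟨hl, Or.inl ⟨hh, ?_⟩⟩
      rw [g1] at g3
      simp only [dg] at g2 g3 ⊢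
      omega
    · obtain ⟨m1, m2⟩ := hp'.bottomLeft_mem hn
      have : bottomLeft t'.1 = b := hp'.uniq _ m1 _ hb (by omega)
      exact absurd ⟨by rw [this, g1], by rw [this, g1]⟩ (h.west t' ht' (hl ▸ hh) t ht hl c hc)

end Tab
end SuperLLT

/-! ### Tableaux are chains of ribbons -/

namespace SuperLLT

lemma keyLt_irrefl {L : Type*} [LinearOrder L] {horiz : L → Prop} (k : L × ℕ) :
    ¬ keyLt horiz k k := by
  rintro (h | ⟨_, ⟨_, h⟩ | ⟨_, h⟩⟩) <;> exact lt_irrefl _ h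

lemma keyLt_asymm {L : Type*} [LinearOrder L] {horiz : L → Prop} {k k' : L × ℕ}
    (h : keyLt horiz k k') : ¬ keyLt horiz k' k := by
  rintro (h' | ⟨e', h'⟩)
  · rcases h with h | ⟨e, _⟩
    · exact lt_asymm h h'
    · exact h'.ne' e
  · rcases h with h | ⟨e, h⟩
    · exact h.ne' e'
    · rw [e] at h
      rcases h with ⟨a, h⟩ | ⟨a, h⟩ <;> rcases h' with ⟨b, h'⟩ | ⟨b, h'⟩
      · omega
      · exact b a
      · exact a b
      · omega

lemma label_le_of_not_keyLt {L : Type*} [LinearOrder L] {horiz : L → Prop} {k k' : L × ℕ}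
    (h : ¬ keyLt horiz k k') : k'.1 ≤ k.1 :=
  le_of_not_gt fun h' => h (Or.inl h')

namespace Tab
variable {n N : ℕ} {L : Type*} [LinearOrder L] {horiz : L → Prop} {μ ν lam : YoungDiagram}
  {T : Finset (Finset (ℕ × ℕ) × L)}

lemma subset (h : Tab n horiz μ lam T) {t : Finset (ℕ × ℕ) × L} (ht : t ∈ T) {c : ℕ × ℕ}
    (hc : c ∈ t.1) : c ∈ lam.cells := ((h.cover c).1 ⟨t, ht, hc⟩).1

/-- Two distinct ribbons of a tableau have distinct keys. -/
lemma key_ne (hn : 1 ≤ n) (h : Tab n horiz μ lam T) {t t' : Finset (ℕ × ℕ) × L}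
    (ht : t ∈ T) (ht' : t' ∈ T) {p p' : ℕ} (hp : RibAt N n p t.1)
    (hp' : RibAt N n p' t'.1) (hne : t ≠ t') : (t.2, p) ≠ (t'.2, p') := by
  intro he
  obtain ⟨e1, rfl⟩ := Prod.mk.inj he
  obtain ⟨c, hc, hce⟩ := hp.ex (p + 1) (by omega) (by omega)
  obtain ⟨d, hd, hde⟩ := hp'.ex (p + 1) (by omega) (by omega)
  rcases lt_trichotomy c.1 d.1 with hlt | heq | hlt
  · have := h.keyLt_of_diag hn ht ht' e1.symm hp hp' hne hc hd (by omega) hlt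
    rw [he] at this
    exact keyLt_irrefl _ this
  · have : c = d := by
      have := hp.rows c hc
      simp only [dg] at hce hde
      ext <;> omega
    exact hne (h.disj t ht t' ht' c hc (this ▸ hd))
  · have := h.keyLt_of_diag hn ht' ht e1 hp' hp hne.symm hd hc (by omega) hlt
    rw [he] at this
    exact keyLt_irrefl _ this

/-- A ribbon with a key larger than all others can be added. -/
lemma insert_ribbon (hn : 1 ≤ n) (hle : ν ≤ lam) {p : ℕ} {l : L}
    (hp : RibAt N n p (lam.cells \ ν.cells)) (h : Tab n horiz μ ν T)
    (hk : ∀ t ∈ T, ∃ p', RibAt N n p' t.1 ∧ keyLt horiz (t.2, p') (l, p)) :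
    Tab n horiz μ lam (insert (lam.cells \ ν.cells, l) T) := by
  have hlab : ∀ t ∈ T, t.2 ≤ l := fun t ht => by
    obtain ⟨p', _, h2⟩ := hk t ht
    exact label_le_of_not_keyLt (keyLt_asymm h2)
  have hnew : ∀ t ∈ T, ∀ c ∈ t.1, c ∉ lam.cells \ ν.cells := fun t ht c hc hc' =>
    (mem_sdiff.1 hc').2 (h.subset ht hc)
  have cover : ∀ c, (∃ t ∈ insert (lam.cells \ ν.cells, l) T, c ∈ t.1) ↔
      c ∈ lam.cells ∧ c ∉ μ.cells := by
    intro c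
    simp only [mem_insert, exists_eq_or_imp, h.cover, mem_sdiff]
    constructor
    · rintro (⟨h1, h2⟩ | ⟨h1, h2⟩)
      · exact ⟨h1, fun h3 => h2 (h.le h3)⟩
      · exact ⟨hle h1, h2⟩
    · rintro ⟨h1, h2⟩
      by_cases h3 : c ∈ ν.cells
      · exact Or.inr ⟨h3, h2⟩
      · exact Or.inl ⟨h1, h3⟩
  refine ⟨h.le.trans hle, ?_, ?_, cover, ?_, ?_, ?_⟩
  · intro t ht
    rcases mem_insert.1 ht with rfl | ht
    · exact hp.isRibbon ⟨ν, lam, hle, rfl⟩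
    · exact h.rib t ht
  · intro t ht t' ht' c hc hc'
    rcases mem_insert.1 ht with rfl | ht <;> rcases mem_insert.1 ht' with rfl | ht'
    · rfl
    · exact absurd hc (hnew t' ht' c hc')
    · exact absurd hc' (hnew t ht c hc)
    · exact h.disj t ht t' ht' c hc hc'
  · intro i x y hxy hy
    by_cases hi : l ≤ i
    · have key : ∀ c, (c ∈ μ.cells ∨ ∃ t ∈ insert (lam.cells \ ν.cells, l) T,
          t.2 ≤ i ∧ c ∈ t.1) ↔ c ∈ lam.cells := by
        intro c
        constructor
        · rintro (h1 | ⟨t, h1, _, h2⟩)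
          · exact hle (h.le h1)
          · exact ((cover c).1 ⟨t, h1, h2⟩).1
        · intro h1
          by_cases h2 : c ∈ μ.cells
          · exact Or.inl h2
          · obtain ⟨t, h3, h4⟩ := (cover c).2 ⟨h1, h2⟩
            refine Or.inr ⟨t, h3, ?_, h4⟩
            rcases mem_insert.1 h3 with rfl | h3
            · exact hi
            · exact (hlab t h3).trans hi
      rw [key] at hy ⊢
      exact lam.isLowerSet hxy hy
    · have key : ∀ c, (∃ t ∈ insert (lam.cells \ ν.cells, l) T, t.2 ≤ i ∧ c ∈ t.1) ↔
          ∃ t ∈ T, t.2 ≤ i ∧ c ∈ t.1 := by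
        intro c
        simp only [mem_insert, exists_eq_or_imp, hi, false_and, false_or]
      rw [key] at hy ⊢
      exact h.young i x y hxy hy
  · intro t ht hh t' ht' he d hd hcon
    rcases mem_insert.1 ht with rfl | ht
    · obtain ⟨m1, m2⟩ := hp.topRight_mem hn
      have w := hp.rows _ m1
      rcases mem_insert.1 ht' with rfl | ht'
      · have := hp.range d hd
        simp only [dg] at *
        omega
      · obtain ⟨p', h1, h2⟩ := hk t' ht'
        have := h1.range d hd
        rcases h2 with h2 | ⟨_, ⟨_, h2⟩ | ⟨h2, _⟩⟩
        · exact h2.ne he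
        · simp only [dg] at *
          omega
        · exact h2 (he ▸ hh)
    · rcases mem_insert.1 ht' with rfl | ht'
      · obtain ⟨p', h1, _⟩ := hk t ht
        obtain ⟨m1, _⟩ := h1.topRight_mem hn
        refine (mem_sdiff.1 hd).2 (ν.isLowerSet ?_ (h.subset ht m1))
        rw [Prod.le_def]; omega
      · exact h.north t ht hh t' ht' he d hd hcon
  · intro t ht hh t' ht' he d hd hcon
    rcases mem_insert.1 ht with rfl | ht
    · obtain ⟨m1, m2⟩ := hp.bottomLeft_mem hn
      have w := hp.rows _ m1
      rcases mem_insert.1 ht' with rfl | ht'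
      · have := hp.range d hd
        simp only [dg] at *
        omega
      · obtain ⟨p', h1, h2⟩ := hk t' ht'
        have := h1.range d hd
        rcases h2 with h2 | ⟨_, ⟨h2, _⟩ | ⟨_, h2⟩⟩
        · exact h2.ne he
        · exact hh (he ▸ h2)
        · simp only [dg] at *
          omega
    · rcases mem_insert.1 ht' with rfl | ht'
      · obtain ⟨p', h1, _⟩ := hk t ht
        obtain ⟨m1, _⟩ := h1.bottomLeft_mem hn
        refine (mem_sdiff.1 hd).2 (ν.isLowerSet ?_ (h.subset ht m1))
        rw [Prod.le_def]; omega
      · exact h.west t ht hh t' ht' he d hd hcon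

/-- The ribbon with the largest key can be removed. -/
lemma erase_ribbon (hn : 1 ≤ n) (h : Tab n horiz μ lam T) {t : Finset (ℕ × ℕ) × L} (ht : t ∈ T)
    {p : ℕ} (hp : RibAt N n p t.1)
    (hk : ∀ t' ∈ T, ∃ p', RibAt N n p' t'.1 ∧ ¬ keyLt horiz (t.2, p) (t'.2, p')) :
    ∃ ν : YoungDiagram, ν ≤ lam ∧ lam.cells \ ν.cells = t.1 ∧ Tab n horiz μ ν (T.erase t) := by
  have hlab : ∀ t' ∈ T, t'.2 ≤ t.2 := fun t' ht' => by
    obtain ⟨p', _, h2⟩ := hk t' ht'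
    exact label_le_of_not_keyLt h2
  have step : ∀ c ∈ t.1, ∀ b ∈ lam.cells, (b = (c.1, c.2 + 1) ∨ b = (c.1 + 1, c.2)) → b ∈ t.1 := by
    intro c hc b hb hcb
    have hle : c ≤ b := by
      rw [Prod.le_def]; rcases hcb with rfl | rfl <;> simp
    obtain ⟨t', ht', hb', _⟩ := h.exists_tile ht hc hle hb
    by_cases hne : t = t'
    · rwa [hne]
    · obtain ⟨p', h1, h2⟩ := hk t' ht'
      exact absurd (h.keyLt_of_adj hn ht ht' hp h1 hne hc hb' hcb) h2
  have upper : ∀ m, ∀ x ∈ t.1, ∀ y ∈ lam.cells, x ≤ y → (y.1 - x.1) + (y.2 - x.2) = m →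
      y ∈ t.1 := by
    intro m
    induction m with
    | zero =>
      intro x hx y _ hxy hm
      rw [Prod.le_def] at hxy
      have : x = y := by ext <;> omega
      rwa [← this]
    | succ m ih =>
      intro x hx y hy hxy hm
      rw [Prod.le_def] at hxy
      by_cases h1 : x.1 < y.1
      · have hle : ((x.1 + 1, x.2) : ℕ × ℕ) ≤ y := by rw [Prod.le_def]; simp only; omega
        exact ih _ (step x hx (x.1 + 1, x.2) (lam.isLowerSet hle hy) (Or.inr rfl)) y hy hle
          (by simp only; omega)
      · have hle : ((x.1, x.2 + 1) : ℕ × ℕ) ≤ y := by rw [Prod.le_def]; simp only; omega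
        exact ih _ (step x hx (x.1, x.2 + 1) (lam.isLowerSet hle hy) (Or.inl rfl)) y hy hle
          (by simp only; omega)
  let ν : YoungDiagram := ⟨lam.cells \ t.1, by
    intro y x hxy hy
    rw [mem_coe, mem_sdiff] at hy ⊢
    exact ⟨lam.isLowerSet hxy hy.1, fun hx => hy.2 (upper _ x hx y hy.1 hxy rfl)⟩⟩
  have hνc : ∀ c, c ∈ ν.cells ↔ c ∈ lam.cells ∧ c ∉ t.1 := fun c => mem_sdiff
  have cover : ∀ c, (∃ t' ∈ T.erase t, c ∈ t'.1) ↔ c ∈ ν.cells ∧ c ∉ μ.cells := by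
    intro c
    rw [hνc]
    constructor
    · rintro ⟨t', h1, h2⟩
      rw [mem_erase] at h1
      have := (h.cover c).1 ⟨t', h1.2, h2⟩
      exact ⟨⟨this.1, fun h3 => h1.1 (h.disj t' h1.2 t ht c h2 h3)⟩, this.2⟩
    · rintro ⟨⟨h1, h2⟩, h3⟩
      obtain ⟨t', h4, h5⟩ := (h.cover c).2 ⟨h1, h3⟩
      refine ⟨t', mem_erase.2 ⟨?_, h4⟩, h5⟩
      rintro rfl
      exact h2 h5
  have hμν : μ ≤ ν := fun c hc => by
    have hc' : c ∈ μ.cells := hc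
    exact (hνc c).2 ⟨h.le hc, fun h1 => ((h.cover c).1 ⟨t, ht, h1⟩).2 hc'⟩
  have hνl : ν ≤ lam := fun c hc => ((hνc c).1 hc).1
  refine ⟨ν, hνl, ?_, hμν, ?_, ?_, cover, ?_, ?_, ?_⟩
  · ext c
    rw [mem_sdiff, hνc]
    constructor
    · rintro ⟨h1, h2⟩
      by_contra h3
      exact h2 ⟨h1, h3⟩
    · intro h1
      exact ⟨h.subset ht h1, fun h2 => h2.2 h1⟩
  · intro t' ht'; exact h.rib t' (mem_of_mem_erase ht')
  · intro t1 h1 t2 h2; exact h.disj t1 (mem_of_mem_erase h1) t2 (mem_of_mem_erase h2)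
  · intro i x y hxy hy
    by_cases hi : t.2 ≤ i
    · have key : ∀ c, (c ∈ μ.cells ∨ ∃ t' ∈ T.erase t, t'.2 ≤ i ∧ c ∈ t'.1) ↔ c ∈ ν.cells := by
        intro c
        constructor
        · rintro (h1 | ⟨t', h1, _, h2⟩)
          · exact hμν h1
          · exact ((cover c).1 ⟨t', h1, h2⟩).1
        · intro h1
          by_cases h2 : c ∈ μ.cells
          · exact Or.inl h2
          · obtain ⟨t', h3, h4⟩ := (cover c).2 ⟨h1, h2⟩
            exact Or.inr ⟨t', h3, (hlab t' (mem_of_mem_erase h3)).trans hi, h4⟩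
      rw [key] at hy ⊢
      exact ν.isLowerSet hxy hy
    · have key : ∀ c, (∃ t' ∈ T.erase t, t'.2 ≤ i ∧ c ∈ t'.1) ↔
          ∃ t' ∈ T, t'.2 ≤ i ∧ c ∈ t'.1 := by
        intro c
        constructor
        · rintro ⟨t', h1, h2⟩; exact ⟨t', mem_of_mem_erase h1, h2⟩
        · rintro ⟨t', h1, h2⟩
          refine ⟨t', mem_erase.2 ⟨?_, h1⟩, h2⟩
          rintro rfl
          exact hi h2.1
      rw [key] at hy ⊢
      exact h.young i x y hxy hy
  · intro t1 h1 hh t2 h2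
    exact h.north t1 (mem_of_mem_erase h1) hh t2 (mem_of_mem_erase h2)
  · intro t1 h1 hh t2 h2
    exact h.west t1 (mem_of_mem_erase h1) hh t2 (mem_of_mem_erase h2)

end Tab

/-- Growing a diagram along a decreasing list of keys produces exactly the tableaux whose ribbons
have their keys in the list. -/
lemma mem_chainSet_iff {n N : ℕ} (hn : 1 ≤ n) {L : Type*} [LinearOrder L] {horiz : L → Prop}
    {μ : YoungDiagram} (ks : List (L × ℕ)) (hks : ks.Pairwise fun a b => keyLt horiz b a) :
    ∀ lam : YoungDiagram, RowsLt N lam.cells → ∀ T, T ∈ chainSet N n μ ks lam ↔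
      Tab n horiz μ lam T ∧ ∀ t ∈ T, ∃ p, RibAt N n p t.1 ∧ (t.2, p) ∈ ks := by
  induction ks with
  | nil =>
    intro lam _ T
    rw [chainSet]
    constructor
    · intro hT
      split_ifs at hT with he
      · subst he
        rw [mem_singleton.1 hT]
        refine ⟨⟨le_rfl, by simp, by simp, by simp, ?_, by simp, by simp⟩, by simp⟩
        rintro i x y hxy (hy | ⟨t, ht, _⟩)
        · exact Or.inl (μ.isLowerSet hxy hy)
        · simp at ht
      · simp at hT
    · rintro ⟨hT, hk⟩
      have hT0 : T = ∅ := eq_empty_of_forall_notMem fun t ht => by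
        obtain ⟨p, _, h⟩ := hk t ht
        simp at h
      subst hT0
      have : μ = lam := by
        refine le_antisymm hT.le fun c hc => ?_
        by_contra hcμ
        obtain ⟨t, ht, _⟩ := (hT.cover c).2 ⟨hc, hcμ⟩
        simp at ht
      simp [this]
  | cons k ks ih =>
    intro lam hN T
    rw [List.pairwise_cons] at hks
    have ih := ih hks.2
    rw [mem_chainSet_cons hn hN]
    constructor
    · rintro (hT | ⟨ν, h1, h2, T', h3, h4⟩)
      · rw [ih lam hN] at hT
        refine ⟨hT.1, fun t ht => ?_⟩
        obtain ⟨p, h1, h2⟩ := hT.2 t ht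
        exact ⟨p, h1, List.mem_cons_of_mem _ h2⟩
      · have h4 : T = insert (lam.cells \ ν.cells, k.1) T' := by rw [h4]; congr!
        rw [ih ν (fun c hc => hN c (h1 hc))] at h3
        subst h4
        refine ⟨Tab.insert_ribbon hn h1 h2 h3.1 fun t ht => ?_, fun t ht => ?_⟩
        · obtain ⟨p, h5, h6⟩ := h3.2 t ht
          exact ⟨p, h5, hks.1 _ h6⟩
        · rcases mem_insert.1 ht with rfl | ht
          · exact ⟨k.2, h2, List.mem_cons_self⟩
          · obtain ⟨p, h5, h6⟩ := h3.2 t ht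
            exact ⟨p, h5, List.mem_cons_of_mem _ h6⟩
    · rintro ⟨hT, hk⟩
      by_cases hex : ∃ t ∈ T, t.2 = k.1 ∧ RibAt N n k.2 t.1
      · right
        obtain ⟨t, ht, htl, htp⟩ := hex
        obtain ⟨ν, h1, h2, h3⟩ := hT.erase_ribbon hn ht htp (fun t' ht' => by
          obtain ⟨p', g1, g2⟩ := hk t' ht'
          refine ⟨p', g1, ?_⟩
          rw [htl]
          rcases List.mem_cons.1 g2 with g2 | g2
          · rw [g2]; exact keyLt_irrefl _
          · exact keyLt_asymm (hks.1 _ g2))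
        refine ⟨ν, h1, h2 ▸ htp, T.erase t, ?_, ?_⟩
        · rw [ih ν (fun c hc => hN c (h1 hc))]
          refine ⟨h3, fun t' ht' => ?_⟩
          rw [mem_erase] at ht'
          obtain ⟨p', g1, g2⟩ := hk t' ht'.2
          refine ⟨p', g1, ?_⟩
          rcases List.mem_cons.1 g2 with g2 | g2
          · exfalso
            refine hT.key_ne hn ht'.2 ht g1 htp ht'.1 ?_
            rw [g2, htl]
          · exact g2
        · rw [h2, ← htl]
          have := (insert_erase ht).symm
          convert this
      · left
        rw [ih lam hN]
        refine ⟨hT, fun t ht => ?_⟩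
        obtain ⟨p, h1, h2⟩ := hk t ht
        refine ⟨p, h1, ?_⟩
        rcases List.mem_cons.1 h2 with h2 | h2
        · exfalso
          refine hex ⟨t, ht, ?_, ?_⟩
          · rw [← h2]
          · rw [← h2]; exact h1
        · exact h2

end SuperLLT

/-! ### The super LLT polynomial as a product of row operators -/

namespace SuperLLT

lemma Hop_eq_prod {R : Type*} [CommRing R] (n C : ℕ) (q x : R) (m : ℕ) :
    Hop n C q x m = ((List.range m).reverse.map fun p => (1 + x • u n C q p : Mat C R)).prod := by
  induction m with
  | zero => simp [Hop]
  | succ m ih => simp [Hop, ih, List.range_succ]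

lemma Vop_eq_prod {R : Type*} [CommRing R] (n C : ℕ) (q y : R) (m : ℕ) :
    Vop n C q y m = ((List.range m).map fun p => (1 + y • u n C q p : Mat C R)).prod := by
  induction m with
  | zero => simp [Vop]
  | succ m ih => simp [Vop, ih, List.range_succ]

open scoped Classical in
/-- The possible keys of ribbons labelled `l`, in decreasing order. -/
noncomputable def letterKeys {L : Type*} (horiz : L → Prop) (C : ℕ) (l : L) : List (L × ℕ) :=
  (if horiz l then (List.range C).reverse else List.range C).map fun p => (l, p)

lemma mem_letterKeys {L : Type*} {horiz : L → Prop} {C : ℕ} {l : L} {k : L × ℕ} :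
    k ∈ letterKeys horiz C l ↔ k.1 = l ∧ k.2 < C := by
  unfold letterKeys
  obtain ⟨l', p⟩ := k
  split_ifs <;> simp [and_comm, eq_comm]

lemma pairwise_letterKeys {L : Type*} [LinearOrder L] (horiz : L → Prop) (C : ℕ) (l : L) :
    (letterKeys horiz C l).Pairwise fun a b => keyLt horiz b a := by
  unfold letterKeys
  rw [List.pairwise_map]
  split_ifs with h
  · rw [List.pairwise_reverse]
    exact List.pairwise_lt_range.imp fun hab => Or.inr ⟨rfl, Or.inl ⟨h, hab⟩⟩
  · exact List.pairwise_lt_range.imp fun hab => Or.inr ⟨rfl, Or.inr ⟨h, hab⟩⟩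

lemma pairwise_keys {L : Type*} [LinearOrder L] (horiz : L → Prop) (C : ℕ) {letters : List L}
    (h : letters.Pairwise fun a b => b < a) :
    (letters.flatMap (letterKeys horiz C)).Pairwise fun a b => keyLt horiz b a := by
  rw [List.pairwise_flatMap]
  refine ⟨fun l _ => pairwise_letterKeys horiz C l, h.imp fun hab x hx y hy => Or.inl ?_⟩
  rw [mem_letterKeys] at hx hy
  rwa [hx.1, hy.1]

open scoped Classical in
lemma prod_keys {L R : Type*} [CommRing R] (horiz : L → Prop) (n C : ℕ) (q : R) (z : L → R)
    {f : L → Bool} (hf : ∀ l, f l = true ↔ horiz l) (letters : List L) :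
    ((letters.flatMap (letterKeys horiz C)).map fun k =>
      (1 + (if horiz k.1 then z k.1 else -z k.1) • u n C q k.2 : Mat C R)).prod =
    (letters.map fun l => rowOp n C q (f l, z l)).prod := by
  induction letters with
  | nil => simp
  | cons l ls ih =>
    rw [List.flatMap_cons, List.map_append, List.prod_append, ih, List.map_cons, List.prod_cons]
    congr 1
    unfold letterKeys rowOp
    have hl := hf l
    by_cases h : horiz l
    · simp [h, hl.2 h, Hop_eq_prod, Function.comp_def]
    · have hl' : f l = false := by simpa [h] using hl
      simp [h, hl', Vop_eq_prod, Function.comp_def]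

open scoped Classical in
lemma weight_eq_tabW {L R : Type*} [Fintype L] [CommRing R] (q : R) (z : L → R)
    (T : Finset (Finset (ℕ × ℕ) × L)) :
    q ^ tabSpin T * ∏ a : L, z a ^ tabWt T a = tabW q z T := by
  unfold tabSpin tabWt tabW
  rw [prod_mul_distrib, prod_pow_eq_pow_sum]
  congr 1
  rw [← prod_fiberwise T (fun t => t.2)]
  refine prod_congr rfl fun a _ => ?_
  rw [prod_congr rfl (g := fun _ => z a) (fun t ht => by rw [(mem_filter.1 ht).2]), prod_const]

lemma rowsLt_of_colLen {lam : YoungDiagram} {N : ℕ} (hN : lam.colLen 0 ≤ N) :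
    RowsLt N lam.cells := by
  intro c hc
  have h1 : c.1 < lam.colLen c.2 := YoungDiagram.mem_iff_lt_colLen.1 hc
  have h2 := lam.colLen_anti 0 c.2 (Nat.zero_le _)
  omega

open scoped Classical in
/-- The super LLT polynomial as a matrix coefficient of a product of row operators, the operator
of the smallest letter acting first. -/
theorem superLLT_eq {n : ℕ} (hn : 1 ≤ n) {μ lam : YoungDiagram} (hle : μ ≤ lam) {L R : Type*}
    [LinearOrder L] [Fintype L] [CommRing R] (horiz : L → Prop) {N : ℕ}
    (hN : lam.colLen 0 ≤ N) (q : R) (z : L → R)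
    {f : L → Bool} (hf : ∀ l, f l = true ↔ horiz l) {letters : List L}
    (hsort : letters.Pairwise fun a b => b < a) (hall : ∀ l, l ∈ letters) :
    superLLT n μ lam L (fun a b => a ≤ b) horiz q z =
      (letters.map fun l => rowOp n (lam.rowLen 0 + N) q (f l, z l)).prod
        (diagBoundary lam N (lam.rowLen 0 + N)) (diagBoundary μ N (lam.rowLen 0 + N)) := by
  set C := lam.rowLen 0 + N with hC
  have hNl := rowsLt_of_colLen hN
  have hNμ : RowsLt N μ.cells := fun c hc => hNl c (hle hc)
  have hμC : μ.rowLen 0 + N ≤ C := by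
    have : μ.rowLen 0 ≤ lam.rowLen 0 := by
      by_contra hlt
      have h1 : (0, lam.rowLen 0) ∈ μ := YoungDiagram.mem_iff_lt_rowLen.2 (by omega)
      have h2 := YoungDiagram.mem_iff_lt_rowLen.1 (hle h1)
      omega
    omega
  have hks := pairwise_keys horiz C hsort
  have hnodup : (letters.flatMap (letterKeys horiz C)).Nodup :=
    hks.imp fun hab he => by subst he; exact keyLt_irrefl _ hab
  rw [← prod_keys horiz n C q z hf, sum_chainSet hn q (fun l => if horiz l then z l else -z l) hNμ
    (supp_diagBoundary hμC) _ hnodup lam hNl _ (supp_diagBoundary hC.ge)]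
  unfold superLLT
  have hset : superTableaux n μ lam L (fun a b => a ≤ b) horiz =
      chainSet N n μ (letters.flatMap (letterKeys horiz C)) lam := by
    ext T
    rw [mem_chainSet_iff hn _ hks lam hNl, superTableaux, mem_filter, isSuperTableau_iff]
    constructor
    · rintro ⟨_, hT⟩
      refine ⟨hT, fun t ht => ?_⟩
      obtain ⟨p, hp⟩ := ribAt_of_isRibbon (N := N) hn (hT.rib t ht)
        (fun c hc => hNl c (hT.subset ht hc))
      refine ⟨p, hp, List.mem_flatMap.2 ⟨t.2, hall _, mem_letterKeys.2 ⟨rfl, ?_⟩⟩⟩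
      obtain ⟨c, hc, hce⟩ := hp.ex (p + 1) (by omega) (by omega)
      have h1 : c.2 < lam.rowLen c.1 := YoungDiagram.mem_iff_lt_rowLen.1 (hT.subset ht hc)
      have h2 := lam.rowLen_anti 0 c.1 (Nat.zero_le _)
      simp only [dg] at hce ⊢
      omega
    · rintro ⟨hT, _⟩
      refine ⟨?_, hT⟩
      rw [mem_powerset]
      intro t ht
      rw [mem_product, mem_powerset]
      refine ⟨fun c hc => ?_, mem_univ _⟩
      rw [mem_sdiff]
      exact (hT.cover c).1 ⟨t, ht, hc⟩
  rw [hset]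
  exact sum_congr rfl fun T _ => weight_eq_tabW q (fun l => if horiz l then z l else -z l) T

/-- The row operators commute, so their product may be taken in the reverse order. -/
lemma prod_reverse_rowOp {L R : Type*} [CommRing R] {n : ℕ} (hn : 1 ≤ n) (C : ℕ) (q : R)
    (f : L → Bool × R) (letters : List L) :
    (letters.reverse.map fun l => rowOp n C q (f l)).prod =
      (letters.map fun l => rowOp n C q (f l)).prod := by
  rw [List.map_reverse]
  refine List.Perm.prod_eq' (List.reverse_perm _) ?_
  refine List.pairwise_of_forall_mem_list fun a ha b hb => ?_
  rw [List.mem_reverse, List.mem_map] at ha hb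
  obtain ⟨l, _, rfl⟩ := ha
  obtain ⟨l', _, rfl⟩ := hb
  exact rowOp_commute hn C q _ _

end SuperLLT

namespace SuperLLT

/-- **The alternate super ribbon lattice model computes super LLT polynomials**
(Theorem `altmainthm`).  Let `n ≥ 1`, let `lam/μ` be a skew shape, let `A = Fin r`
(horizontal letters), `A' = Fin s` (vertical letters) carry a total order `ord` on
`A ⊕ A'` refining both natural orders, and let `N` be at least the number of parts of
`lam`.  The grid has one row per letter (rows listed from top to bottom in increasing
order, via the increasing enumeration `e`) and `lam₁ + N` columns; row weights are the
*alternate* horizontal- resp. vertical-strip weights with spectral parameters `x a`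
resp. `y b`; the side boundary edges are all `<`, the top boundary is given by `lam + ρ`
and the bottom boundary by `μ + ρ`.  Then the partition function equals the super LLT
polynomial: `Z(B̃_{lam/μ}(X/Y)) = G_{lam/μ}(X/Y; q)`. -/
theorem alt_partitionZ_eq_superLLT (n : ℕ) (hn : 1 ≤ n) (μ lam : YoungDiagram)
    (hμlam : μ ≤ lam) (r s : ℕ) (ord : LinearOrder (Fin r ⊕ Fin s))
    (hordA : ∀ i j : Fin r, i ≤ j → ord.le (Sum.inl i) (Sum.inl j))
    (hordA' : ∀ i j : Fin s, i ≤ j → ord.le (Sum.inr i) (Sum.inr j))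
    (N : ℕ) (hN : lam.colLen 0 ≤ N)
    (e : Fin (r + s) ≃ (Fin r ⊕ Fin s))
    (he : ∀ i j : Fin (r + s), i < j → ord.lt (e i) (e j))
    (R : Type*) [CommRing R] (q : R) (x : Fin r → R) (y : Fin s → R) :
    partitionZ n (r + s) (lam.rowLen 0 + N)
        (fun i => Sum.elim (fun a => altHorizTable n q (x a))
          (fun b => altVertTable n q (y b)) (e i))
        (diagBoundary lam N (lam.rowLen 0 + N)) (diagBoundary μ N (lam.rowLen 0 + N))
        (fun _ _ => true) (fun _ _ => true) =
      superLLT n μ lam (Fin r ⊕ Fin s) ord.le (fun a => a.isLeft = true) q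
        (Sum.elim x y) := by
  classical
  have hsort : (List.ofFn e).reverse.Pairwise fun a b => ord.lt b a := by
    rw [List.pairwise_reverse, List.pairwise_ofFn]
    exact fun i j hij => he i j hij
  have hall : ∀ l, l ∈ (List.ofFn e).reverse := fun l => by
    rw [List.mem_reverse, List.mem_ofFn]
    exact ⟨e.symm l, e.apply_symm_apply l⟩
  have hR := @superLLT_eq n hn μ lam hμlam (Fin r ⊕ Fin s) R ord _ _ (fun a => a.isLeft = true)
    N hN q (Sum.elim x y) Sum.isLeft (fun _ => Iff.rfl) _ hsort hall
  have hrev := prod_reverse_rowOp hn (lam.rowLen 0 + N) q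
    (fun l : Fin r ⊕ Fin s => (l.isLeft, Sum.elim x y l)) (List.ofFn e)
  rw [List.map_ofFn] at hrev
  rw [hrev] at hR
  have htab : (fun i => Sum.elim (fun a => altHorizTable n q (x a))
      (fun b => altVertTable n q (y b)) (e i)) = fun i : Fin (r + s) =>
        rowTab n q ((e i).isLeft, Sum.elim x y (e i)) := by
    funext i
    rcases e i with a | b <;> simp [rowTab]
  rw [htab, partitionZ_eq hn]
  exact hR.symm

end SuperLLT
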